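/- Let A ⊆ K be the k-subalgebra of the Koszul complex K generated by all elements z_{a,b} over all t ≥ 0 and all sequences a = (a_1, …, a_{t+1}), b = (b_1, …, b_t) of variables from {x_1, …, x_n}, and let A_t := A ∩ K_t. Then for every t ≥ 0, every Koszul cycle c ∈ ker(d_t) can be written as c = u + d_{t+1}(w) with u ∈ A_t and w ∈ K_{t+1}; that is, the Koszul homology H_*(𝔪²) is generated as a k-algebra by the homology classes of the elements z_{a,b}. -/

import Mathlib

set_option maxHeartbeats 1000000
set_option synthInstance.maxHeartbeats 400000

open scoped TensorProduct
open MvPolynomial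

noncomputable section

variable (k : Type) [Field k] (n : ℕ)

/-- The polynomial ring `S = k[x_1,…,x_n]`. -/
abbrev S := MvPolynomial (Fin n) k

/-- The space `S_1` of linear forms. -/
abbrev S1 := homogeneousSubmodule (Fin n) k 1

/-- The space `S_2` of quadratic forms. -/
abbrev S2 := homogeneousSubmodule (Fin n) k 2

/-- The ambient algebra `S ⊗ Λ(S_2)` containing all terms `K_t = S ⊗ ⋀^t S_2`
of the Koszul complex `K(𝔪², S)`; the product is `(f ⊗ ω)(g ⊗ η) = fg ⊗ ω∧η`. -/
abbrev KK := (MvPolynomial (Fin n) k) ⊗[k] ExteriorAlgebra k (S2 k n)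

variable {k n}

/-- The product of two linear forms, as an element of `S_2`. -/
def mulW (a b : S1 k n) : S2 k n :=
  ⟨(a : S k n) * (b : S k n), by
    rw [mem_homogeneousSubmodule]
    have ha := (mem_homogeneousSubmodule 1 (a : S k n)).1 a.2
    have hb := (mem_homogeneousSubmodule 1 (b : S k n)).1 b.2
    simpa using ha.mul hb⟩

/-- The variable `x_i`, as an element of `S_1`. -/
def xv (i : Fin n) : S1 k n :=
  ⟨X i, by rw [mem_homogeneousSubmodule]; exact isHomogeneous_X _ _⟩

/-- The quadratic monomial `x_i x_j`, as an element of `S_2`. -/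
def q (i j : Fin n) : S2 k n := mulW (xv i) (xv j)

variable (k n)

/-- `K_t = S ⊗ ⋀^t S_2`, as a subspace of the ambient algebra `KK`. -/
def Kt (t : ℕ) : Submodule k (KK k n) :=
  LinearMap.range (TensorProduct.map (LinearMap.id : S k n →ₗ[k] S k n)
    (Submodule.subtype (⋀[k]^t (S2 k n))))

variable {k n}

/-- The family of Koszul differentials, encoded as linear endomorphisms of the
ambient space `KK`: `D t` restricted to `K_t` is the `t`-th Koszul differential
`d_t : K_t → K_{t-1}`, i.e. `d_0 = 0` and
`d_t(f ⊗ m_1 ∧ ⋯ ∧ m_t) = Σ_j (-1)^{j-1} (f·m_j) ⊗ m_1 ∧ ⋯ ∧ m̂_j ∧ ⋯ ∧ m_t`. -/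
def IsKoszulDiff (D : ℕ → KK k n →ₗ[k] KK k n) : Prop :=
  D 0 = 0 ∧
  ∀ (t : ℕ) (f : S k n) (m : Fin (t+1) → S2 k n),
    D (t+1) (f ⊗ₜ[k] (ExteriorAlgebra.ιMulti k (t+1) m : ExteriorAlgebra k (S2 k n)))
      = ∑ j : Fin (t+1), ((-1:ℤ)^(j:ℕ)) •
          ((f * ((m j : S k n))) ⊗ₜ[k]
            (ExteriorAlgebra.ιMulti k t (fun l => m (j.succAbove l)) : ExteriorAlgebra k (S2 k n)))

/-- The cycle `z_{a,b} = Σ_{σ ∈ 𝔖_{t+1}} sgn(σ) a_{σ(t+1)} ⊗ (b_1 a_{σ(1)} ∧ ⋯ ∧ b_t a_{σ(t)})`. -/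
def zel (t : ℕ) (a : Fin (t+1) → S1 k n) (b : Fin t → S1 k n) : KK k n :=
  ∑ σ : Equiv.Perm (Fin (t+1)),
    ((Equiv.Perm.sign σ : ℤ)) •
      (((a (σ (Fin.last t)) : S k n)) ⊗ₜ[k]
        (ExteriorAlgebra.ιMulti k t (fun j => mulW (b j) (a (σ j.castSucc))) :
          ExteriorAlgebra k (S2 k n)))

/-- The cycle `Z_i` (0-indexed: `Zel i` is the paper's `Z_i` for `0 ≤ i ≤ n-1`), namely
`Z_i = Σ_{j=0}^{i} (-1)^{j} x_j ⊗ (x_0 x_i ∧ ⋯ ∧ x̂_j x_i ∧ ⋯ ∧ x_{i-1} x_i ∧ x_i²)`. -/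
def Zel (i : Fin n) : KK k n :=
  ∑ j : Fin ((i:ℕ)+1),
    ((-1:ℤ)^(j:ℕ)) •
      ((X (Fin.castLE i.isLt j) : S k n) ⊗ₜ[k]
        (ExteriorAlgebra.ιMulti k (i:ℕ)
          (fun l : Fin (i:ℕ) => q (Fin.castLE i.isLt (j.succAbove l)) i) :
            ExteriorAlgebra k (S2 k n)))


namespace Kz

/-- Kronecker delta. -/
def dl (k : Type) [Field k] {n : ℕ} (i j : Fin n) : k := if i = j then 1 else 0

theorem dl_self (i : Fin n) : dl k i i = 1 := by simp [dl]
theorem dl_ne {i j : Fin n} (h : i ≠ j) : dl k i j = 0 := by simp [dl, h]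
theorem dl_comm (i j : Fin n) : dl k i j = dl k j i := by simp [dl, eq_comm]

theorem sum_dl {V : Type*} [AddCommGroup V] [Module k V] (i : Fin n) (f : Fin n → V) :
    ∑ j, dl k i j • f j = f i := by simp [dl]
theorem sum_dl' {V : Type*} [AddCommGroup V] [Module k V] (i : Fin n) (f : Fin n → V) :
    ∑ j, dl k j i • f j = f i := by simp [dl]

/-- A Fock-type representation. -/
structure Fock (k : Type) [Field k] (n : ℕ) (V : Type) [AddCommGroup V] [Module k V] where
  X : Fin n → V →ₗ[k] V
  P : Fin n → V →ₗ[k] V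
  e : Fin n → Fin n → V →ₗ[k] V
  c : Fin n → Fin n → V →ₗ[k] V
  vac : V
  eps : V →ₗ[k] k
  B : V →ₗ[k] V →ₗ[k] k
  pr : Fin n → V →ₗ[k] V
  XX : ∀ i j v, X i (X j v) = X j (X i v)
  PP : ∀ i j v, P i (P j v) = P j (P i v)
  PX : ∀ i j v, P i (X j v) = X j (P i v) + dl k i j • v
  Xe : ∀ i a b v, e a b (X i v) = X i (e a b v)
  Xc : ∀ i a b v, c a b (X i v) = X i (c a b v)
  Pe : ∀ i a b v, P i (e a b v) = e a b (P i v)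
  Pc : ∀ i a b v, P i (c a b v) = c a b (P i v)
  ee : ∀ a b a' b' v, e a b (e a' b' v) = - e a' b' (e a b v)
  cc : ∀ a b a' b' v, c a b (c a' b' v) = - c a' b' (c a b v)
  ce : ∀ a b a' b' v, c a b (e a' b' v) =
    (dl k a a' * dl k b b' + dl k a b' * dl k b a') • v - e a' b' (c a b v)
  es : ∀ a b v, e a b v = e b a v
  cs : ∀ a b v, c a b v = c b a v
  P1 : ∀ i, P i vac = 0
  c1 : ∀ a b, c a b vac = 0
  eps1 : eps vac = 1
  epsX : ∀ i v, eps (X i v) = 0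
  epse : ∀ a b v, eps (e a b v) = 0
  B1 : ∀ v, B vac v = eps v
  BX : ∀ i u v, B (X i u) v = B u (P i v)
  Be : ∀ a b u v, B (e a b u) v = B u (c a b v)
  Xinj : ∀ i v, X i v = 0 → v = 0
  pr1 : ∀ y, pr y vac = vac
  prX0 : ∀ y v, pr y (X y v) = 0
  prX : ∀ y i v, i ≠ y → pr y (X i v) = X i (pr y v)
  pre0 : ∀ y v, pr y (e y y v) = 0
  pre : ∀ y a b v, ¬ (a = y ∧ b = y) → pr y (e a b v) = e a b (pr y v)
  ind : ∀ W : Submodule k V, vac ∈ W → (∀ i v, v ∈ W → X i v ∈ W) →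
    (∀ a b v, v ∈ W → e a b v ∈ W) → ∀ v, v ∈ W

namespace Fock

variable {V : Type} [AddCommGroup V] [Module k V] (F : Fock k n V)

theorem ext' {U : Type*} [AddCommGroup U] [Module k U] (f g : V →ₗ[k] U)
    (h1 : f F.vac = g F.vac) (hX : ∀ i v, f v = g v → f (F.X i v) = g (F.X i v))
    (he : ∀ a b v, f v = g v → f (F.e a b v) = g (F.e a b v)) (v : V) : f v = g v := by
  have := F.ind (LinearMap.eqLocus f g) h1 (fun i v h => hX i v h) (fun a b v h => he a b v h) v
  exact this

/-- weighted differential -/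
def dd (χ : Fin n → k) : V →ₗ[k] V :=
  (1/2 : k) • ∑ i, ∑ j, (χ i * χ j) • (F.X i ∘ₗ F.X j ∘ₗ F.c i j)

def d : V →ₗ[k] V := F.dd (fun _ => 1)

def E (a b : Fin n) : V →ₗ[k] V := F.X a ∘ₗ F.P b + ∑ l, F.e a l ∘ₗ F.c b l

theorem E_apply (a b : Fin n) (v : V) :
    F.E a b v = F.X a (F.P b v) + ∑ l, F.e a l (F.c b l v) := by simp [E]

theorem dd_apply (χ : Fin n → k) (v : V) : F.dd χ v =
    (1/2 : k) • ∑ i, ∑ j, (χ i * χ j) • F.X i (F.X j (F.c i j v)) := by simp [dd]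

theorem dd1 (χ) : F.dd χ F.vac = 0 := by simp [dd_apply, F.c1]
theorem ddX (χ i v) : F.dd χ (F.X i v) = F.X i (F.dd χ v) := by
  simp only [dd_apply, F.Xc, map_smul, map_sum]
  have h : ∀ a b w, F.X a (F.X b (F.X i w)) = F.X i (F.X a (F.X b w)) := by
    intro a b w; rw [F.XX b i, F.XX a i]
  simp only [h]

theorem ee0 [CharZero k] (a b v) : F.e a b (F.e a b v) = 0 := by
  have h := F.ee a b a b v
  have h2 : (2:k) • F.e a b (F.e a b v) = 0 := by rw [two_smul]; nth_rewrite 1 [h]; simp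
  simpa using h2

theorem dde [CharZero k] (χ a b v) : F.dd χ (F.e a b v) =
    (χ a * χ b) • F.X a (F.X b v) - F.e a b (F.dd χ v) := by
  have h : ∑ i, ∑ j, (χ i * χ j) • F.X i (F.X j (F.c i j (F.e a b v))) =
     (2 : k) • ((χ a * χ b) • F.X a (F.X b v)) -
      ∑ i, ∑ j, (χ i * χ j) • F.X i (F.X j (F.e a b (F.c i j v))) := by
    simp only [F.ce, map_sub, map_smul, smul_sub, Finset.sum_sub_distrib]
    congr 1
    have : ∀ i j, (χ i * χ j) • (dl k i a * dl k j b + dl k i b * dl k j a) • F.X i (F.X j v)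
      = dl k i a • dl k j b • (χ i * χ j) • F.X i (F.X j v)
       + dl k i b • dl k j a • (χ i * χ j) • F.X i (F.X j v) := by
      intro i j; simp only [smul_smul, ← add_smul]; congr 1; ring
    simp only [this, Finset.sum_add_distrib, ← Finset.smul_sum, sum_dl', two_smul]
    rw [F.XX b a, mul_comm (χ b)]
  rw [dd_apply, h, smul_sub, smul_smul]
  simp only [dd_apply, map_smul, map_sum, F.Xe]
  norm_num

theorem E1 (a b) : F.E a b F.vac = 0 := by simp [E_apply, F.c1, F.P1]
theorem EX (a b i v) : F.E a b (F.X i v) = F.X i (F.E a b v) + dl k b i • F.X a v := by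
  simp only [E_apply, F.PX, F.Xc, F.Xe, map_add, map_sum, map_smul, F.XX i]; abel
theorem Ee (a b i j v) : F.E a b (F.e i j v) =
    F.e i j (F.E a b v) + dl k b i • F.e a j v + dl k b j • F.e a i v := by
  simp only [E_apply, F.ce, F.Pe, F.Xe, map_add, map_sum, map_smul, map_sub,
    Finset.sum_sub_distrib, F.ee i j, Finset.sum_neg_distrib]
  have : ∀ l, (dl k b i * dl k l j + dl k b j * dl k l i) • F.e a l v =
     dl k b i • dl k l j • F.e a l v + dl k b j • dl k l i • F.e a l v := by
    intro l; simp only [add_smul, mul_smul]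
  simp only [this, Finset.sum_add_distrib, ← Finset.smul_sum, sum_dl']
  abel

end Fock
end Kz

namespace Kz
namespace Fock
variable {V : Type} [AddCommGroup V] [Module k V] (F : Fock k n V)

theorem cdd (χ a b v) : F.c a b (F.dd χ v) = - F.dd χ (F.c a b v) := by
  simp only [dd_apply, map_smul, map_sum, F.Xc, F.cc a b, map_neg, smul_neg,
    Finset.sum_neg_distrib]

theorem Pdd [CharZero k] (χ a v) : F.P a (F.dd χ v) = F.dd χ (F.P a v) +
    χ a • ∑ j, χ j • F.X j (F.c a j v) := by
  have h : ∑ i, ∑ j, (χ i * χ j) • F.P a (F.X i (F.X j (F.c i j v))) =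
     ∑ i, ∑ j, (χ i * χ j) • F.X i (F.X j (F.c i j (F.P a v))) +
      (2:k) • χ a • ∑ j, χ j • F.X j (F.c a j v) := by
    have : ∀ i j, (χ i * χ j) • F.P a (F.X i (F.X j (F.c i j v))) =
       (χ i * χ j) • F.X i (F.X j (F.c i j (F.P a v))) +
       (dl k a j • (χ j * χ i) • F.X i (F.c j i v) + dl k a i • (χ i * χ j) • F.X j (F.c i j v)) := by
      intro i j
      simp only [F.PX, F.Pc, map_add, map_smul, F.cs j i]; module
    simp only [this, Finset.sum_add_distrib, sum_dl, ← Finset.smul_sum, two_smul]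
    congr 1
    simp only [mul_smul, ← Finset.smul_sum]
  rw [dd_apply, dd_apply]
  simp only [map_smul, map_sum, h, smul_add, smul_smul]
  congr 2
  ring

theorem ddd [CharZero k] (χ v) : F.dd χ (F.dd χ v) = 0 := by
  refine F.ext' (F.dd χ ∘ₗ F.dd χ) 0 ?_ ?_ ?_ v
  · simp [dd1]
  · intro i v h; simp only [LinearMap.comp_apply, LinearMap.zero_apply] at h ⊢
    simp [ddX, h]
  · intro a b v h; simp only [LinearMap.comp_apply, LinearMap.zero_apply] at h ⊢
    simp [ddX, dde, h]

theorem dX (i v) : F.d (F.X i v) = F.X i (F.d v) := F.ddX _ _ _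
theorem de [CharZero k] (a b v) : F.d (F.e a b v) = F.X a (F.X b v) - F.e a b (F.d v) := by
  simp [d, dde]
theorem d1 : F.d F.vac = 0 := F.dd1 _
theorem d_d [CharZero k] (v) : F.d (F.d v) = 0 := F.ddd _ _
theorem cd (a b v) : F.c a b (F.d v) = - F.d (F.c a b v) := F.cdd _ _ _ _
theorem Pd [CharZero k] (a v) : F.P a (F.d v) = F.d (F.P a v) + ∑ j, F.X j (F.c a j v) := by
  simp [d, Pdd]

theorem Ed [CharZero k] (a b v) : F.E a b (F.d v) = F.d (F.E a b v) := by
  refine F.ext' (F.E a b ∘ₗ F.d) (F.d ∘ₗ F.E a b) ?_ ?_ ?_ v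
  · simp [E1, d1]
  · intro i v h; simp only [LinearMap.comp_apply] at h ⊢
    simp [EX, dX, h]
  · intro i j v h; simp only [LinearMap.comp_apply] at h ⊢
    simp only [de, map_sub, EX, Ee, map_add, map_smul, h]
    rw [F.XX i a]
    module

theorem EP (a b i v) : F.E a b (F.P i v) = F.P i (F.E a b v) - dl k a i • F.P b v := by
  simp only [E_apply, map_add, map_sum, F.PX, F.Pc, F.Pe, F.PP i b, dl_comm i a]
  abel

theorem Ec (a b i j v) : F.E a b (F.c i j v) = F.c i j (F.E a b v)
    - dl k a i • F.c b j v - dl k a j • F.c b i v := by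
  simp only [E_apply, map_add, map_sum, F.Xc, F.Pc, F.ce, Finset.sum_sub_distrib]
  have : ∀ l, (dl k i a * dl k j l + dl k i l * dl k j a) • F.c b l v =
     dl k i a • dl k j l • F.c b l v + dl k j a • dl k i l • F.c b l v := by
    intro l; module
  simp only [this, Finset.sum_add_distrib, ← Finset.smul_sum, sum_dl,
    F.cc i j, map_neg, Finset.sum_neg_distrib]
  rw [dl_comm i a, dl_comm j a]
  abel

theorem EE (a b a' b' v) : F.E a b (F.E a' b' v) = F.E a' b' (F.E a b v)
    + dl k b a' • F.E a b' v - dl k a b' • F.E a' b v := by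
  refine F.ext' (F.E a b ∘ₗ F.E a' b') (F.E a' b' ∘ₗ F.E a b + dl k b a' • F.E a b'
    - dl k a b' • F.E a' b) ?_ ?_ ?_ v
  · simp [E1]
  · intro i v h
    simp only [LinearMap.comp_apply, LinearMap.sub_apply, LinearMap.add_apply,
      LinearMap.smul_apply] at h ⊢
    simp only [EX, map_add, map_smul, h, map_sub, dl_comm b' a]
    module
  · intro i j v h
    simp only [LinearMap.comp_apply, LinearMap.sub_apply, LinearMap.add_apply,
      LinearMap.smul_apply] at h ⊢
    simp only [Ee, map_add, map_smul, h, map_sub, dl_comm b' a, F.es a' a]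
    module

/-- weight operators -/
def Ew (w : Fin n → ℕ) : V →ₗ[k] V := ∑ a, (w a : k) • F.E a a

theorem Ew_apply (w v) : F.Ew w v = ∑ a, (w a : k) • F.E a a v := by simp [Ew]

theorem Ew1 (w) : F.Ew w F.vac = 0 := by simp [Ew_apply, E1]

theorem sum_w_dl {U : Type*} [AddCommGroup U] [Module k U] (w : Fin n → ℕ) (i : Fin n)
    (f : Fin n → U) : ∑ a, (w a : k) • dl k a i • f a = (w i : k) • f i := by
  simp only [smul_comm _ (dl k _ _), sum_dl']

theorem EwX (w i v) : F.Ew w (F.X i v) = F.X i (F.Ew w v) + (w i : k) • F.X i v := by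
  simp only [Ew_apply, EX, smul_add, Finset.sum_add_distrib, sum_w_dl, map_sum, map_smul]
theorem Ewe (w i j v) : F.Ew w (F.e i j v) = F.e i j (F.Ew w v) + (w i + w j : k) • F.e i j v := by
  simp only [Ew_apply, Ee, smul_add, Finset.sum_add_distrib, sum_w_dl, map_sum, map_smul, F.es j i]
  module
theorem EwP (w i v) : F.Ew w (F.P i v) = F.P i (F.Ew w v) - (w i : k) • F.P i v := by
  simp only [Ew_apply, EP, smul_sub, Finset.sum_sub_distrib, sum_w_dl, map_sum, map_smul]
theorem Ewc (w i j v) : F.Ew w (F.c i j v) = F.c i j (F.Ew w v) - (w i + w j : k) • F.c i j v := by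
  simp only [Ew_apply, Ec, smul_sub, Finset.sum_sub_distrib, sum_w_dl, map_sum, map_smul, F.cs j i]
  module
theorem Ewd [CharZero k] (w v) : F.Ew w (F.d v) = F.d (F.Ew w v) := by
  simp only [Ew_apply, Ed, map_sum, map_smul]
theorem EwE (w a b v) : F.Ew w (F.E a b v) = F.E a b (F.Ew w v) + (w a - w b : k) • F.E a b v := by
  have h : ∀ c, F.E c c (F.E a b v) = _ := fun c => F.EE c c a b v
  simp only [Ew_apply, h, smul_sub, smul_add, Finset.sum_sub_distrib, Finset.sum_add_distrib,
    sum_w_dl, map_sum, map_smul]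
  module

/-- weight spaces -/
def Wt (w : Fin n → ℕ) (μ : k) : Submodule k V := Module.End.eigenspace (F.Ew w) μ

theorem mem_Wt {w μ v} : v ∈ F.Wt w μ ↔ F.Ew w v = μ • v := Module.End.mem_eigenspace_iff

theorem WtX {w μ v} (i) (h : v ∈ F.Wt w μ) : F.X i v ∈ F.Wt w (μ + w i) := by
  rw [mem_Wt] at *; rw [EwX, h, map_smul]; module
theorem Wte {w μ v} (i j) (h : v ∈ F.Wt w μ) : F.e i j v ∈ F.Wt w (μ + w i + w j) := by
  rw [mem_Wt] at *; rw [Ewe, h, map_smul]; module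
theorem WtP {w μ v} (i) (h : v ∈ F.Wt w μ) : F.P i v ∈ F.Wt w (μ - w i) := by
  rw [mem_Wt] at *; rw [EwP, h, map_smul]; module
theorem Wtc {w μ v} (i j) (h : v ∈ F.Wt w μ) : F.c i j v ∈ F.Wt w (μ - w i - w j) := by
  rw [mem_Wt] at *; rw [Ewc, h, map_smul]; module
theorem WtE {w μ v} (i j) (h : v ∈ F.Wt w μ) : F.E i j v ∈ F.Wt w (μ + w i - w j) := by
  rw [mem_Wt] at *; rw [EwE, h, map_smul]; module
theorem Wtd [CharZero k] {w μ v} (h : v ∈ F.Wt w μ) : F.d v ∈ F.Wt w μ := by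
  rw [mem_Wt] at *; rw [Ewd, h, map_smul]
theorem Wt1 (w) : F.vac ∈ F.Wt w 0 := by rw [mem_Wt, Ew1]; simp

theorem sub_top (w) : ⨆ m : ℕ, F.Wt w (m : k) = ⊤ := by
  rw [eq_top_iff]; intro v _
  refine F.ind _ ?_ ?_ ?_ v
  · exact Submodule.mem_iSup_of_mem 0 (by simpa using F.Wt1 w)
  · intro i v hv
    induction hv using Submodule.iSup_induction' with
    | mem m x hx => exact Submodule.mem_iSup_of_mem (m + w i) (by simpa using F.WtX i hx)
    | zero => simp
    | add x y _ _ hx hy => rw [map_add]; exact add_mem hx hy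
  · intro i j v hv
    induction hv using Submodule.iSup_induction' with
    | mem m x hx => exact Submodule.mem_iSup_of_mem (m + w i + w j) (by simpa using F.Wte i j hx)
    | zero => simp
    | add x y _ _ hx hy => rw [map_add]; exact add_mem hx hy

theorem Wt_indep (w) : iSupIndep (F.Wt w) := Module.End.eigenspaces_iSupIndep _

theorem Wt_bot (w) (μ : k) (h : ∀ m : ℕ, μ ≠ m) : F.Wt w μ = ⊥ := by
  have h1 := F.Wt_indep w μ
  have : ⨆ ν, ⨆ (_ : ν ≠ μ), F.Wt w ν = ⊤ := by
    rw [eq_top_iff, ← F.sub_top w]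
    exact iSup_le fun m => le_iSup₂_of_le (m : k) (h m).symm le_rfl
  rw [this] at h1
  exact disjoint_top.1 h1

theorem Wt_neg [CharZero k] (w) (M : ℤ) (h : M < 0) : F.Wt w (M : k) = ⊥ := by
  refine F.Wt_bot w _ fun m hm => ?_
  have : M = m := by exact_mod_cast hm
  omega

theorem inv_comp [CharZero k] (w) (W : Submodule k V) (hW : ∀ v ∈ W, F.Ew w v ∈ W) (s : Finset ℕ) :
    ∀ (x : ℕ → V), (∀ m : ℕ, x m ∈ F.Wt w (m : k)) → ∑ m ∈ s, x m ∈ W → ∀ m ∈ s, x m ∈ W := by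
  classical
  induction s using Finset.induction_on with
  | empty => simp
  | insert a s ha ih =>
    intro x hx hs
    have h1 : ∑ m ∈ s, ((m : k) - a) • x m ∈ W := by
      have h2 : ∑ m ∈ s, ((m : k) - a) • x m = F.Ew w (∑ m ∈ insert a s, x m)
          - (a : k) • ∑ m ∈ insert a s, x m := by
        have : ∀ m, F.Ew w (x m) = (m : k) • x m := fun m => F.mem_Wt.1 (hx m)
        rw [map_sum, Finset.sum_congr rfl (fun m _ => this m), Finset.smul_sum,
          ← Finset.sum_sub_distrib, Finset.sum_insert ha]
        simp [sub_smul]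
      rw [h2]
      exact sub_mem (hW _ hs) (W.smul_mem _ hs)
    have h3 := ih _ (fun m => Submodule.smul_mem _ _ (hx m)) h1
    have h4 : ∀ m ∈ s, x m ∈ W := fun m hm => by
      have hne : (m : k) - a ≠ 0 := by
        rw [sub_ne_zero]; intro h; exact ha (by have : m = a := by exact_mod_cast h
                                                exact this ▸ hm)
      have := W.smul_mem ((m : k) - a)⁻¹ (h3 m hm)
      rwa [smul_smul, inv_mul_cancel₀ hne, one_smul] at this
    intro m hm
    rcases Finset.mem_insert.1 hm with rfl | hm
    · rw [Finset.sum_insert ha] at hs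
      have := sub_mem hs (sum_mem h4)
      simpa using this
    · exact h4 m hm

theorem Wt_le_of_inv [CharZero k] (w) (W : Submodule k V) (hW : ∀ v ∈ W, F.Ew w v ∈ W)
    (U : Submodule k V) (h : ∀ m : ℕ, W ⊓ F.Wt w m ≤ U) : W ≤ U := by
  intro v hv
  have hv' : v ∈ ⨆ m : ℕ, F.Wt w (m : k) := by rw [F.sub_top w]; trivial
  obtain ⟨x, hx, rfl⟩ := (Submodule.mem_iSup_iff_exists_finsupp _ _).mp hv'
  exact sum_mem fun m hm => h m ⟨F.inv_comp w W hW x.support x hx hv m hm, hx m⟩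

end Fock

theorem eq_of_indep {ι : Type*} {V : Type} [AddCommGroup V] [Module k V] (f g : ι → Submodule k V)
    (hf : iSupIndep f) (hg : ∀ i, g i ≤ f i) (ht : ⨆ i, g i = ⊤) (i : ι) : f i ≤ g i := by
  have h1 : g i ⊔ ⨆ j, ⨆ (_ : j ≠ i), g j = ⊤ := by
    rw [eq_top_iff, ← ht]
    refine iSup_le fun j => ?_
    by_cases h : j = i
    · subst h; exact le_sup_left
    · exact le_sup_of_le_right (le_iSup₂_of_le j h le_rfl)
  have h2 : (⨆ j, ⨆ (_ : j ≠ i), g j) ⊓ f i = ⊥ := by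
    rw [eq_bot_iff, ← (hf i).eq_bot, inf_comm]
    exact inf_le_inf_left _ (iSup₂_mono fun j _ => hg j)
  calc f i = (g i ⊔ ⨆ j, ⨆ (_ : j ≠ i), g j) ⊓ f i := by rw [h1]; simp
    _ = g i ⊔ (⨆ j, ⨆ (_ : j ≠ i), g j) ⊓ f i := sup_inf_assoc_of_le _ (hg i)
    _ ≤ g i := by rw [h2]; simp

end Kz

namespace Kz
namespace Fock
variable {V : Type} [AddCommGroup V] [Module k V] (F : Fock k n V)

theorem Ppr0 (y v) : F.P y (F.pr y v) = 0 := by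
  refine F.ext' (F.P y ∘ₗ F.pr y) 0 ?_ ?_ ?_ v
  · simp [F.pr1, F.P1]
  · intro i v h; simp only [LinearMap.comp_apply, LinearMap.zero_apply] at h ⊢
    by_cases hi : i = y
    · subst hi; simp [F.prX0]
    · rw [F.prX _ _ _ hi, F.PX, h, dl_ne (Ne.symm hi)]; simp
  · intro a b v h; simp only [LinearMap.comp_apply, LinearMap.zero_apply] at h ⊢
    by_cases hi : a = y ∧ b = y
    · obtain ⟨rfl, rfl⟩ := hi; simp [F.pre0]
    · rw [F.pre _ _ _ _ hi, F.Pe, h]; simp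

theorem cpr0 (y v) : F.c y y (F.pr y v) = 0 := by
  refine F.ext' (F.c y y ∘ₗ F.pr y) 0 ?_ ?_ ?_ v
  · simp [F.pr1, F.c1]
  · intro i v h; simp only [LinearMap.comp_apply, LinearMap.zero_apply] at h ⊢
    by_cases hi : i = y
    · subst hi; simp [F.prX0]
    · rw [F.prX _ _ _ hi, F.Xc, h]; simp
  · intro a b v h; simp only [LinearMap.comp_apply, LinearMap.zero_apply] at h ⊢
    by_cases hi : a = y ∧ b = y
    · obtain ⟨rfl, rfl⟩ := hi; simp [F.pre0]
    · rw [F.pre _ _ _ _ hi, F.ce, h]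
      have : dl k y a * dl k y b + dl k y b * dl k y a = 0 := by
        by_cases h1 : a = y
        · have : b ≠ y := fun h2 => hi ⟨h1, h2⟩
          rw [dl_ne this.symm]; simp
        · rw [dl_ne (Ne.symm h1)]; simp
      simp [this]

theorem Ppr (y i v) (hi : i ≠ y) : F.pr y (F.P i v) = F.P i (F.pr y v) := by
  refine F.ext' (F.pr y ∘ₗ F.P i) (F.P i ∘ₗ F.pr y) ?_ ?_ ?_ v
  · simp [F.pr1, F.P1]
  · intro j v h; simp only [LinearMap.comp_apply] at h ⊢
    by_cases hj : j = y
    · subst hj; rw [F.PX, dl_ne hi]; simp [F.prX0]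
    · rw [F.prX _ _ _ hj, F.PX, F.PX, map_add, F.prX _ _ _ hj, h, map_smul]
  · intro a b v h; simp only [LinearMap.comp_apply] at h ⊢
    by_cases hj : a = y ∧ b = y
    · obtain ⟨rfl, rfl⟩ := hj; simp [F.pre0, F.Pe]
    · rw [F.Pe, F.pre _ _ _ _ hj, F.pre _ _ _ _ hj, F.Pe, h]

theorem cpr (y i j v) (hi : ¬ (i = y ∧ j = y)) : F.pr y (F.c i j v) = F.c i j (F.pr y v) := by
  refine F.ext' (F.pr y ∘ₗ F.c i j) (F.c i j ∘ₗ F.pr y) ?_ ?_ ?_ v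
  · simp [F.pr1, F.c1]
  · intro l v h; simp only [LinearMap.comp_apply] at h ⊢
    by_cases hj : l = y
    · subst hj; simp [F.prX0, F.Xc]
    · rw [F.prX _ _ _ hj, F.Xc, F.Xc, F.prX _ _ _ hj, h]
  · intro a b v h; simp only [LinearMap.comp_apply] at h ⊢
    by_cases hj : a = y ∧ b = y
    · obtain ⟨rfl, rfl⟩ := hj
      rw [F.ce, F.pre0]
      have : dl k i b * dl k j b + dl k i b * dl k j b = 0 := by
        by_cases h1 : i = b
        · have : j ≠ b := fun h2 => hi ⟨h1, h2⟩
          rw [dl_ne this]; simp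
        · rw [dl_ne h1]; simp
      simp [this, F.pre0]
    · rw [F.ce, F.pre _ _ _ _ hj, F.ce, map_sub, F.pre _ _ _ _ hj, h, map_smul]

/-- characteristic function of the complement of `y` -/
def ch (k : Type) [Field k] {n : ℕ} (y i : Fin n) : k := if i = y then 0 else 1

theorem ch0 (y : Fin n) : ch k y y = 0 := by simp [ch]
theorem ch1 {y i : Fin n} (h : i ≠ y) : ch k y i = 1 := by simp [ch, h]

theorem sum_ch {U : Type*} [AddCommGroup U] [Module k U] (y : Fin n) (f : Fin n → U) :
    ∑ i, ch k y i • f i = ∑ i ∈ Finset.univ.erase y, f i := by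
  rw [← Finset.add_sum_erase _ _ (Finset.mem_univ y), ch0, zero_smul, zero_add]
  exact Finset.sum_congr rfl fun i hi => by rw [ch1 (Finset.ne_of_mem_erase hi), one_smul]

/-- differential in the variables other than `y` -/
def d' (y : Fin n) : V →ₗ[k] V := F.dd (ch k y)

theorem d'X (y i v) : F.d' y (F.X i v) = F.X i (F.d' y v) := F.ddX _ _ _
theorem d'e [CharZero k] (y i v) : F.d' y (F.e y i v) = - F.e y i (F.d' y v) := by
  simp [d', dde, ch0]
theorem Pd' [CharZero k] (y a v) (h : a ≠ y) : F.P a (F.d' y v) = F.d' y (F.P a v) +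
    ∑ j ∈ Finset.univ.erase y, F.X j (F.c a j v) := by
  rw [d', Pdd, ch1 h, one_smul, sum_ch]

theorem prd [CharZero k] (y v) : F.pr y (F.d v) = F.d' y (F.pr y v) := by
  refine F.ext' (F.pr y ∘ₗ F.d) (F.d' y ∘ₗ F.pr y) ?_ ?_ ?_ v
  · simp [F.pr1, d1, d', dd1]
  · intro l v h; simp only [LinearMap.comp_apply] at h ⊢
    by_cases hj : l = y
    · subst hj; simp [F.prX0, F.dX]
    · rw [F.prX _ _ _ hj, F.dX, d'X, F.prX _ _ _ hj, h]
  · intro a b v h; simp only [LinearMap.comp_apply] at h ⊢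
    by_cases hj : a = y ∧ b = y
    · obtain ⟨rfl, rfl⟩ := hj
      simp [F.de, F.pre0, F.prX0]
    · rw [F.de, F.pre _ _ _ _ hj, map_sub, F.pre _ _ _ _ hj, h, d', dde]
      by_cases ha : a = y
      · subst ha; simp [F.prX0, ch0]
      · by_cases hb : b = y
        · subst hb; simp [F.prX, ha, F.prX0, ch0]
        · simp [F.prX, ha, hb, ch1]

/-- the ideal generated by `y^2` and `e_yy` -/
def J (y : Fin n) : Submodule k V :=
  LinearMap.range (F.X y ∘ₗ F.X y) ⊔ LinearMap.range (F.e y y)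

theorem mem_J {y v} : v ∈ F.J y ↔ ∃ a b, v = F.X y (F.X y a) + F.e y y b := by
  simp only [J, Submodule.mem_sup, LinearMap.mem_range]
  constructor
  · rintro ⟨_, ⟨a, rfl⟩, _, ⟨b, rfl⟩, rfl⟩; exact ⟨a, b, rfl⟩
  · rintro ⟨a, b, rfl⟩; exact ⟨_, ⟨a, rfl⟩, _, ⟨b, rfl⟩, rfl⟩

theorem JX (y i v) (h : v ∈ F.J y) : F.X i v ∈ F.J y := by
  obtain ⟨a, b, rfl⟩ := F.mem_J.1 h
  refine F.mem_J.2 ⟨F.X i a, F.X i b, ?_⟩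
  rw [map_add, F.XX i, F.XX i, F.Xe]

theorem Je (y i j v) (h : v ∈ F.J y) : F.e i j v ∈ F.J y := by
  obtain ⟨a, b, rfl⟩ := F.mem_J.1 h
  refine F.mem_J.2 ⟨F.e i j a, - F.e i j b, ?_⟩
  rw [map_add, F.Xe, F.Xe, map_neg, F.ee]

theorem J_boundary [CharZero k] (y v) (h : v ∈ F.J y) (hd : F.d v = 0) : ∃ w, v = F.d w := by
  obtain ⟨a, b, rfl⟩ := F.mem_J.1 h
  refine ⟨F.e y y a, ?_⟩
  rw [F.de]
  simp only [map_add, F.dX, F.de] at hd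
  set b' := b + F.d a with hb'
  have h1 : F.X y (F.X y b') = F.e y y (F.d b') := by
    rw [← sub_eq_zero]; refine Eq.trans ?_ hd
    simp only [hb', map_add, F.d_d, add_zero]; abel
  have h2 : F.e y y b' = 0 := by
    apply F.Xinj y; apply F.Xinj y
    rw [← F.Xe, ← F.Xe, h1, F.ee0]
  rw [hb', map_add] at h2
  rw [eq_sub_iff_add_eq, add_assoc, h2, add_zero]

theorem pr_J (y v) : v - F.pr y v - F.X y (F.pr y (F.P y v)) ∈ F.J y := by
  have key := F.ind ((F.J y).comap (LinearMap.id - F.pr y - F.X y ∘ₗ F.pr y ∘ₗ F.P y)) ?_ ?_ ?_ v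
  · simpa using key
  · simp [F.pr1, F.P1]
  · intro i v h
    simp only [Submodule.mem_comap, LinearMap.sub_apply, LinearMap.id_apply,
      LinearMap.comp_apply] at h ⊢
    by_cases hi : i = y
    · subst hi
      rw [F.prX0, F.PX, dl_self, one_smul, map_add, F.prX0, zero_add, sub_zero, ← map_sub]
      have := F.JX i i _ h
      have h2 : F.X i (F.X i (F.pr i (F.P i v))) ∈ F.J i := F.mem_J.2 ⟨_, 0, by simp; rfl⟩
      have := add_mem this h2
      rw [← map_add] at this
      simpa using this
    · rw [F.prX _ _ _ hi, F.PX, dl_ne (Ne.symm hi), zero_smul, add_zero, F.prX _ _ _ hi, F.XX y i,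
        ← map_sub, ← map_sub]
      exact F.JX _ _ _ h
  · intro a b v h
    simp only [Submodule.mem_comap, LinearMap.sub_apply, LinearMap.id_apply,
      LinearMap.comp_apply] at h ⊢
    by_cases hi : a = y ∧ b = y
    · obtain ⟨rfl, rfl⟩ := hi
      rw [F.pre0, F.Pe, F.pre0]
      exact F.mem_J.2 ⟨0, v, by simp⟩
    · rw [F.pre _ _ _ _ hi, F.Pe, F.pre _ _ _ _ hi, ← F.Xe, ← map_sub, ← map_sub]
      exact F.Je _ _ _ _ h

/-! operators for a fixed variable -/
def de' (y : Fin n) : V →ₗ[k] V := ∑ j ∈ Finset.univ.erase y, F.X j ∘ₗ F.c y j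
def ds (y : Fin n) : V →ₗ[k] V := ∑ j ∈ Finset.univ.erase y, F.e y j ∘ₗ F.P j
def R (y l : Fin n) : V →ₗ[k] V := ∑ j ∈ Finset.univ.erase y, F.e y j ∘ₗ F.c l j
def Rs (y l : Fin n) : V →ₗ[k] V := ∑ j ∈ Finset.univ.erase y, F.e l j ∘ₗ F.c y j

theorem de'_apply (y v) : F.de' y v = ∑ j ∈ Finset.univ.erase y, F.X j (F.c y j v) := by simp [de']
theorem ds_apply (y v) : F.ds y v = ∑ j ∈ Finset.univ.erase y, F.e y j (F.P j v) := by simp [ds]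
theorem R_apply (y l v) : F.R y l v = ∑ j ∈ Finset.univ.erase y, F.e y j (F.c l j v) := by simp [R]
theorem Rs_apply (y l v) : F.Rs y l v = ∑ j ∈ Finset.univ.erase y, F.e l j (F.c y j v) := by
  simp [Rs]

theorem sum_er {U : Type*} [AddCommGroup U] (y : Fin n) (f : Fin n → U) :
    ∑ i, f i = f y + ∑ i ∈ Finset.univ.erase y, f i :=
  (Finset.add_sum_erase _ _ (Finset.mem_univ y)).symm

theorem prEyl (y l v) (_ : l ≠ y) : F.pr y (F.E y l v) = F.R y l (F.pr y v) := by
  rw [E_apply, map_add, F.prX0, zero_add, map_sum, sum_er y, F.pre0, zero_add, R_apply]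
  refine Finset.sum_congr rfl fun j hj => ?_
  have hj := Finset.ne_of_mem_erase hj
  rw [F.pre _ _ _ _ (fun h => hj h.2), F.cpr _ _ _ _ (fun h => hj h.2)]

theorem prEly (y l v) (hl : l ≠ y) : F.pr y (F.E l y v) = F.X l (F.pr y (F.P y v)) +
    F.Rs y l (F.pr y v) + F.e l y (F.pr y (F.c y y v)) := by
  rw [E_apply, map_add, F.prX _ _ _ hl, map_sum, sum_er y, F.pre _ _ _ _ (fun h => hl h.1), Rs_apply]
  have : ∑ i ∈ Finset.univ.erase y, F.pr y (F.e l i (F.c y i v)) =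
    ∑ i ∈ Finset.univ.erase y, F.e l i (F.c y i (F.pr y v)) := by
    refine Finset.sum_congr rfl fun j hj => ?_
    have hj := Finset.ne_of_mem_erase hj
    rw [F.pre _ _ _ _ (fun h => hj h.2), F.cpr _ _ _ _ (fun h => hj h.2)]
  rw [this]; abel

theorem prds (y v) : F.pr y (F.ds y v) = F.ds y (F.pr y v) := by
  rw [ds_apply, ds_apply, map_sum]
  refine Finset.sum_congr rfl fun j hj => ?_
  have hj := Finset.ne_of_mem_erase hj
  rw [F.pre _ _ _ _ (fun h => hj h.2), F.Ppr _ _ _ hj]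

/-- first part of the Laplacian computation -/
theorem prEE (y l v) (hl : l ≠ y) : F.pr y (F.E l y (F.E y l v)) =
    F.X l (F.R y l (F.pr y (F.P y v))) + F.X l (F.P l (F.pr y v)) + F.Rs y l (F.R y l (F.pr y v))
    + F.e l y (F.R y l (F.pr y (F.c y y v))) + (2:k) • F.e l y (F.c y l (F.pr y v)) := by
  rw [F.prEly _ _ _ hl, F.prEyl _ _ _ hl]
  have h1 : F.P y (F.E y l v) = F.E y l (F.P y v) + F.P l v := by
    rw [F.EP, dl_self, one_smul]; abel
  have h2 : F.c y y (F.E y l v) = F.E y l (F.c y y v) + (2:k) • F.c y l v := by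
    rw [F.Ec, dl_self, one_smul, F.cs l y]; module
  simp only [h1, h2, map_add, F.prEyl _ _ _ hl, map_smul, F.Ppr _ _ _ hl,
    F.cpr y y l _ (fun h => hl h.2)]
  abel

theorem antisym_sum [CharZero k] (y v) :
    ∑ l ∈ Finset.univ.erase y, F.e l y (F.R y l v) = 0 := by
  simp only [R_apply, map_sum]
  have h : ∑ l ∈ Finset.univ.erase y, ∑ j ∈ Finset.univ.erase y, F.e l y (F.e y j (F.c l j v)) =
      - ∑ l ∈ Finset.univ.erase y, ∑ j ∈ Finset.univ.erase y, F.e l y (F.e y j (F.c l j v)) := by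
    conv_lhs => rw [Finset.sum_comm]
    rw [← Finset.sum_neg_distrib]
    refine Finset.sum_congr rfl fun j hj => ?_
    rw [← Finset.sum_neg_distrib]
    refine Finset.sum_congr rfl fun i hi => ?_
    rw [F.ee i y y j, F.cs i j, F.es y j, F.es i y]
  have h2 : (2:k) • ∑ l ∈ Finset.univ.erase y, ∑ j ∈ Finset.univ.erase y,
      F.e l y (F.e y j (F.c l j v)) = 0 := by rw [two_smul]; nth_rewrite 1 [h]; simp
  simpa using h2

theorem sumXR [CharZero k] (y p) : ∑ l ∈ Finset.univ.erase y, F.X l (F.R y l p) =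
    F.ds y (F.d' y p) + F.d' y (F.ds y p) := by
  simp only [ds_apply, R_apply, map_sum]
  rw [Finset.sum_comm, ← Finset.sum_add_distrib]
  refine Finset.sum_congr rfl fun j hj => ?_
  rw [F.Pd' _ _ _ (Finset.ne_of_mem_erase hj), F.d'e, map_add, map_sum]
  simp only [F.Xe, F.cs j]
  abel

theorem de_ds (y v) : F.de' y (F.ds y v) + F.ds y (F.de' y v) =
    ∑ l ∈ Finset.univ.erase y, F.X l (F.P l v) + ∑ l ∈ Finset.univ.erase y, F.e l y (F.c y l v) := by
  have h1 : F.de' y (F.ds y v) = ∑ l ∈ Finset.univ.erase y, F.X l (F.P l v) -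
     ∑ j ∈ Finset.univ.erase y, ∑ i ∈ Finset.univ.erase y, F.X j (F.e y i (F.P i (F.c y j v))) := by
    rw [de'_apply, ← Finset.sum_sub_distrib]
    refine Finset.sum_congr rfl fun j hj => ?_
    have hj' := Finset.ne_of_mem_erase hj
    rw [ds_apply, map_sum, map_sum]
    have : ∀ i ∈ Finset.univ.erase y, F.X j (F.c y j (F.e y i (F.P i v))) =
      dl k j i • F.X j (F.P i v) - F.X j (F.e y i (F.P i (F.c y j v))) := by
      intro i hi
      have hi := Finset.ne_of_mem_erase hi
      rw [F.ce, dl_self, dl_ne hj']; simp [F.Pc]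
    rw [Finset.sum_congr rfl this, Finset.sum_sub_distrib]
    congr 1
    simp [dl, hj']
  have h2 : F.ds y (F.de' y v) = ∑ l ∈ Finset.univ.erase y, F.e l y (F.c y l v) +
     ∑ j ∈ Finset.univ.erase y, ∑ i ∈ Finset.univ.erase y, F.X j (F.e y i (F.P i (F.c y j v))) := by
    rw [Finset.sum_comm, ds_apply, ← Finset.sum_add_distrib]
    refine Finset.sum_congr rfl fun i hi => ?_
    have hi' := Finset.ne_of_mem_erase hi
    rw [de'_apply, map_sum, map_sum]
    have : ∀ j ∈ Finset.univ.erase y, F.e y i (F.P i (F.X j (F.c y j v))) =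
      dl k i j • F.e i y (F.c y j v) + F.X j (F.e y i (F.P i (F.c y j v))) := by
      intro j hj
      rw [F.PX, map_add, F.Xe, map_smul, F.es i y, add_comm]
    rw [Finset.sum_congr rfl this, Finset.sum_add_distrib]
    congr 1
    simp [dl, hi']
  rw [h1, h2]; abel

/-- the Laplacian -/
def T (y : Fin n) (m : k) : V →ₗ[k] V :=
  m • LinearMap.id + F.de' y ∘ₗ F.ds y + ∑ l ∈ Finset.univ.erase y, F.Rs y l ∘ₗ F.R y l

def XX' (y : Fin n) : V →ₗ[k] V :=
  ∑ l ∈ Finset.univ.erase y, F.E l y ∘ₗ F.E y l - F.d ∘ₗ F.ds y ∘ₗ F.P y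

/-- weight counting `y` -/
def wy (y : Fin n) : Fin n → ℕ := fun i => if i = y then 1 else 0

theorem Ew_wy (y v) : F.Ew (wy y) v = F.E y y v := by
  simp [Ew_apply, wy]

theorem prE (y v) : F.pr y (F.E y y v) = F.E y y (F.pr y v) := by
  have h1 : F.pr y (F.E y y v) = ∑ j ∈ Finset.univ.erase y, F.e y j (F.c y j (F.pr y v)) := by
    rw [E_apply, map_add, F.prX0, zero_add, map_sum, sum_er y, F.pre0, zero_add]
    refine Finset.sum_congr rfl fun j hj => ?_
    have hj := Finset.ne_of_mem_erase hj
    rw [F.pre _ _ _ _ (fun h => hj h.2), F.cpr _ _ _ _ (fun h => hj h.2)]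
  rw [h1, E_apply, F.Ppr0, sum_er y, F.cpr0]; simp

theorem sum_ec (y v) : ∑ j ∈ Finset.univ.erase y, F.e y j (F.c y j v) =
    F.E y y v - F.X y (F.P y v) - F.e y y (F.c y y v) := by
  rw [E_apply, sum_er y]; abel

theorem d'pr [CharZero k] (y c) (hc : F.d c = 0) : F.d' y (F.pr y (F.P y c)) = - F.de' y (F.pr y c) := by
  have h := congrArg (F.pr y) (F.Pd y c)
  rw [hc, map_zero, map_zero, map_add, F.prd, map_sum, sum_er y, F.prX0, zero_add] at h
  have h2 : ∑ i ∈ Finset.univ.erase y, F.pr y (F.X i (F.c y i c)) = F.de' y (F.pr y c) := by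
    rw [de'_apply]
    refine Finset.sum_congr rfl fun j hj => ?_
    have hj := Finset.ne_of_mem_erase hj
    rw [F.prX _ _ _ hj, F.cpr _ _ _ _ (fun h => hj h.2)]
  rw [h2] at h
  exact eq_neg_of_add_eq_zero_left h.symm

theorem prXX [CharZero k] (y c) (m : k) (hc : F.d c = 0) (hm : F.E y y c = m • c) :
    F.pr y (F.XX' y c) = F.T y m (F.pr y c) := by
  have hp := F.d'pr y c hc
  have hq : ∑ l ∈ Finset.univ.erase y, F.e l y (F.c y l (F.pr y c)) = m • F.pr y c := by
    have := F.sum_ec y (F.pr y c)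
    rw [F.Ppr0, F.cpr0, ← F.prE, hm] at this
    simp only [map_zero, sub_zero, map_smul] at this
    rw [← this]
    exact Finset.sum_congr rfl fun j _ => F.es _ _ _
  have h1 : ∑ l ∈ Finset.univ.erase y, F.pr y (F.E l y (F.E y l c)) =
    F.ds y (F.d' y (F.pr y (F.P y c))) + F.d' y (F.ds y (F.pr y (F.P y c))) +
     ∑ l ∈ Finset.univ.erase y, F.X l (F.P l (F.pr y c)) +
     ∑ l ∈ Finset.univ.erase y, F.Rs y l (F.R y l (F.pr y c)) + (2:k) • m • F.pr y c := by
    rw [Finset.sum_congr rfl fun l hl => F.prEE y l c (Finset.ne_of_mem_erase hl)]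
    simp only [Finset.sum_add_distrib, sumXR, antisym_sum, ← Finset.smul_sum, hq, add_zero]
  have h2 := F.de_ds y (F.pr y c)
  rw [hq] at h2
  simp only [XX', T, LinearMap.sub_apply, LinearMap.sum_apply, LinearMap.comp_apply, map_sub,
    map_sum, LinearMap.add_apply, LinearMap.smul_apply, LinearMap.id_apply, h1, F.prd, F.prds, hp,
    map_neg]
  rw [← sub_eq_iff_eq_add] at h2
  rw [← h2]
  module

end Fock
end Kz

namespace Kz
namespace Fock
variable {V : Type} [AddCommGroup V] [Module k V] (F : Fock k n V)

theorem BP (i u v) : F.B (F.P i u) v = F.B u (F.X i v) := by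
  have h := F.ext' (F.B ∘ₗ F.P i) (F.B.compl₂ (F.X i)) ?_ ?_ ?_ u
  · exact LinearMap.congr_fun h v
  · ext v; simp [F.P1, F.B1, F.epsX]
  · intro j u h; ext v
    have h := LinearMap.congr_fun h (F.P j v)
    simp only [LinearMap.comp_apply, LinearMap.compl₂_apply] at h ⊢
    rw [F.PX, map_add, LinearMap.add_apply, F.BX, h, F.BX, F.PX, map_add, map_smul, map_smul,
      LinearMap.smul_apply, dl_comm i j]
  · intro a b u h; ext v
    have h := LinearMap.congr_fun h (F.c a b v)
    simp only [LinearMap.comp_apply, LinearMap.compl₂_apply] at h ⊢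
    rw [F.Pe, F.Be, h, F.Be, F.Xc]

theorem Bc (i l u v) : F.B (F.c i l u) v = F.B u (F.e i l v) := by
  have h := F.ext' (F.B ∘ₗ F.c i l) (F.B.compl₂ (F.e i l)) ?_ ?_ ?_ u
  · exact LinearMap.congr_fun h v
  · ext v; simp [F.c1, F.B1, F.epse]
  · intro j u h; ext v
    have h := LinearMap.congr_fun h (F.P j v)
    simp only [LinearMap.comp_apply, LinearMap.compl₂_apply] at h ⊢
    rw [F.Xc, F.BX, h, F.BX, F.Pe]
  · intro a b u h; ext v
    have h := LinearMap.congr_fun h (F.c a b v)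
    simp only [LinearMap.comp_apply, LinearMap.compl₂_apply] at h ⊢
    rw [F.ce, map_sub, LinearMap.sub_apply, F.Be, h, F.Be, F.ce, map_sub, map_smul, map_smul,
      LinearMap.smul_apply, dl_comm a i, dl_comm b l, dl_comm a l, dl_comm b i,
      mul_comm (dl k l a)]

/-- rational vectors -/
inductive InL : V → Prop
  | vac : InL F.vac
  | zero : InL 0
  | add (u v) : InL u → InL v → InL (u + v)
  | smul (r : ℚ) (v) : InL v → InL ((r : k) • v)
  | X (i v) : InL v → InL (F.X i v)
  | e (a b v) : InL v → InL (F.e a b v)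

variable {F}

theorem dl_rat [CharZero k] (i j : Fin n) : dl k i j = ((dl ℚ i j : ℚ) : k) := by
  simp only [dl]; split_ifs <;> simp

theorem InL.neg [CharZero k] {v : V} (h : InL F v) : InL F (-v) := by
  have := InL.smul (-1) v h
  simpa using this

theorem InL.P [CharZero k] {v : V} (h : InL F v) (i) : InL F (F.P i v) := by
  induction h with
  | vac => rw [F.P1]; exact .zero
  | zero => rw [map_zero]; exact .zero
  | add u v _ _ hu hv => rw [map_add]; exact .add _ _ hu hv
  | smul r v _ h => rw [map_smul]; exact .smul _ _ h
  | X j v hv h => rw [F.PX, dl_rat]; exact .add _ _ (.X _ _ h) (.smul _ _ hv)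
  | e a b v hv h => rw [F.Pe]; exact .e _ _ _ h

theorem InL.c [CharZero k] {v : V} (h : InL F v) (i j) : InL F (F.c i j v) := by
  induction h with
  | vac => rw [F.c1]; exact .zero
  | zero => rw [map_zero]; exact .zero
  | add u v _ _ hu hv => rw [map_add]; exact .add _ _ hu hv
  | smul r v _ h => rw [map_smul]; exact .smul _ _ h
  | X j v hv h => rw [F.Xc]; exact .X _ _ h
  | e a b v hv h =>
    rw [F.ce, sub_eq_add_neg]
    refine .add _ _ ?_ (InL.neg (.e _ _ _ h))
    have := InL.smul (dl ℚ i a * dl ℚ j b + dl ℚ i b * dl ℚ j a) v hv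
    push_cast [← dl_rat] at this
    exact this

theorem InL.sum {ι : Type*} (s : Finset ι) (f : ι → V) (h : ∀ i ∈ s, InL F (f i)) :
    InL F (∑ i ∈ s, f i) := by
  classical
  induction s using Finset.induction_on with
  | empty => exact .zero
  | insert a s ha ih =>
    rw [Finset.sum_insert ha]
    exact .add _ _ (h _ (by simp)) (ih fun i hi => h _ (by simp [hi]))

theorem InL.eps [CharZero k] {v : V} (h : InL F v) : ∃ r : ℚ, F.eps v = r := by
  induction h with
  | vac => exact ⟨1, by simp [F.eps1]⟩
  | zero => exact ⟨0, by simp⟩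
  | add u v _ _ hu hv =>
    obtain ⟨r, hr⟩ := hu; obtain ⟨s, hs⟩ := hv
    exact ⟨r + s, by simp [hr, hs]⟩
  | smul r v _ h => obtain ⟨s, hs⟩ := h; exact ⟨r * s, by simp [hs]⟩
  | X j v hv h => exact ⟨0, by simp [F.epsX]⟩
  | e a b v hv h => exact ⟨0, by simp [F.epse]⟩

theorem InL.B [CharZero k] {u v : V} (h : InL F u) (hv : InL F v) : ∃ r : ℚ, F.B u v = r := by
  induction h generalizing v with
  | vac => rw [F.B1]; exact hv.eps
  | zero => exact ⟨0, by simp⟩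
  | add u v' _ _ hu hv' =>
    obtain ⟨r, hr⟩ := hu hv; obtain ⟨s, hs⟩ := hv' hv
    exact ⟨r + s, by simp [hr, hs]⟩
  | smul r v _ h => obtain ⟨s, hs⟩ := h hv; exact ⟨r * s, by simp [hs]⟩
  | X j u hu h => rw [F.BX]; exact h (hv.P _)
  | e a b u hu h => rw [F.Be]; exact h (hv.c _ _)

variable (F)

def w1 : Fin n → ℕ := fun _ => 1

theorem Ew_w1 (v) : F.Ew w1 v = ∑ a, F.X a (F.P a v) + ∑ a, ∑ l, F.e a l (F.c a l v) := by
  simp [Ew_apply, w1, E_apply, Finset.sum_add_distrib]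

theorem Wt0 [CharZero k] (v) (h : v ∈ F.Wt w1 0) : v = F.eps v • F.vac := by
  let g : ℕ → Submodule k V := fun m => if m = 0 then Submodule.span k {F.vac} else F.Wt w1 m
  have hind : iSupIndep (fun m : ℕ => F.Wt w1 (m : k)) :=
    (F.Wt_indep w1).comp Nat.cast_injective
  have := eq_of_indep (fun m : ℕ => F.Wt w1 (m : k)) g hind ?_ ?_ 0 (by simpa using h)
  · simp only [g, if_true] at this
    obtain ⟨a, rfl⟩ := Submodule.mem_span_singleton.1 this
    simp [F.eps1]
  · intro m
    by_cases hm : m = 0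
    · simp only [g, hm, if_true, Submodule.span_singleton_le_iff_mem]
      simpa using F.Wt1 w1
    · simp [g, hm]
  · rw [eq_top_iff]; intro v _
    have hgW : ∀ m x, x ∈ g m → x ∈ F.Wt w1 (m : k) := by
      intro m x hx
      by_cases hm : m = 0
      · simp only [g, hm, if_true] at hx
        obtain ⟨a, rfl⟩ := Submodule.mem_span_singleton.1 hx
        subst hm
        simpa using Submodule.smul_mem _ a (F.Wt1 w1)
      · simpa [g, hm] using hx
    refine F.ind _ ?_ ?_ ?_ v
    · exact Submodule.mem_iSup_of_mem 0 (by simp [g, Submodule.mem_span_singleton_self])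
    · intro i v hv
      induction hv using Submodule.iSup_induction' with
      | mem m x hx =>
        refine Submodule.mem_iSup_of_mem (m + 1) ?_
        have := F.WtX i (hgW m x hx)
        simpa [g, w1] using this
      | zero => simp
      | add x y _ _ hx hy => rw [map_add]; exact add_mem hx hy
    · intro i j v hv
      induction hv using Submodule.iSup_induction' with
      | mem m x hx =>
        refine Submodule.mem_iSup_of_mem (m + 1 + 1) ?_
        have := F.Wte i j (hgW m x hx)
        simpa [g, w1] using this
      | zero => simp
      | add x y _ _ hx hy => rw [map_add]; exact add_mem hx hy

theorem posdef [CharZero k] (N : ℕ) : ∀ (M : ℤ) (v : V), M < N → InL F v → v ∈ F.Wt w1 (M : k) →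
    ∃ r : ℚ, 0 ≤ r ∧ F.B v v = r ∧ (r = 0 → v = 0) := by
  induction N with
  | zero =>
    intro M v hM _ hv
    rw [F.Wt_neg _ _ (by simpa using hM)] at hv
    have : v = 0 := by simpa using hv
    subst this
    exact ⟨0, le_rfl, by simp, by simp⟩
  | succ N ih =>
    intro M v hM hL hv
    rcases lt_trichotomy M 0 with h0 | h0 | h0
    · rw [F.Wt_neg _ _ h0] at hv
      have : v = 0 := by simpa using hv
      subst this
      exact ⟨0, le_rfl, by simp, by simp⟩
    · subst h0
      have h := F.Wt0 v (by simpa using hv)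
      obtain ⟨r, hr⟩ := hL.eps
      refine ⟨r * r, mul_self_nonneg r, ?_, ?_⟩
      · rw [h]; simp [F.B1, F.eps1, hr]
      · intro h0
        have : r = 0 := by simpa using h0
        rw [h, hr, this]; simp
    · have hP : ∀ i, ∃ r : ℚ, 0 ≤ r ∧ F.B (F.P i v) (F.P i v) = r ∧ (r = 0 → F.P i v = 0) := by
        intro i
        refine ih (M - 1) _ (by push_cast at hM; omega) (hL.P i) ?_
        have := F.WtP i hv
        simpa [w1] using this
      have hc : ∀ i j, ∃ r : ℚ, 0 ≤ r ∧ F.B (F.c i j v) (F.c i j v) = r ∧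
          (r = 0 → F.c i j v = 0) := by
        intro i j
        refine ih (M - 1 - 1) _ (by push_cast at hM; omega) (hL.c i j) ?_
        have := F.Wtc i j hv
        simpa [w1] using this
      choose p hp0 hp1 hp2 using hP
      choose q hq0 hq1 hq2 using hc
      have hM0 : (M : ℚ) ≠ 0 := by exact_mod_cast h0.ne'
      have hMk : (M : k) ≠ 0 := by exact_mod_cast h0.ne'
      have hE := F.mem_Wt.1 hv
      have key : (M : k) * F.B v v = ((∑ i, p i + ∑ i, ∑ j, q i j : ℚ) : k) := by
        rw [← smul_eq_mul, ← LinearMap.smul_apply, ← map_smul, ← hE, Ew_w1]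
        simp only [map_add, map_sum, LinearMap.add_apply, LinearMap.sum_apply, F.BX, F.Be, hp1, hq1]
        push_cast; rfl
      refine ⟨(∑ i, p i + ∑ i, ∑ j, q i j) / M, ?_, ?_, ?_⟩
      · refine div_nonneg (add_nonneg (Finset.sum_nonneg fun i _ => hp0 i)
          (Finset.sum_nonneg fun i _ => Finset.sum_nonneg fun j _ => hq0 i j)) ?_
        exact_mod_cast h0.le
      · rw [Rat.cast_div, ← key]; push_cast; field_simp
      · intro hr
        rw [div_eq_zero_iff, or_iff_left hM0] at hr
        have hs1 := Finset.sum_nonneg fun i (_ : i ∈ Finset.univ) => hp0 i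
        have hs2 := Finset.sum_nonneg fun i (_ : i ∈ Finset.univ) =>
          Finset.sum_nonneg fun j (_ : j ∈ Finset.univ) => hq0 i j
        have e1 : ∑ i, p i = 0 := by linarith
        have e2 : ∑ i, ∑ j, q i j = 0 := by linarith
        have e3 : ∀ i, F.P i v = 0 := fun i => hp2 i
          ((Finset.sum_eq_zero_iff_of_nonneg fun i _ => hp0 i).1 e1 i (Finset.mem_univ i))
        have e4 : ∀ i j, F.c i j v = 0 := fun i j => hq2 i j
          ((Finset.sum_eq_zero_iff_of_nonneg fun j _ => hq0 i j).1
            ((Finset.sum_eq_zero_iff_of_nonneg fun i _ =>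
              Finset.sum_nonneg fun j (_ : j ∈ Finset.univ) => hq0 i j).1 e2 i
              (Finset.mem_univ i)) j (Finset.mem_univ j))
        rw [Ew_w1] at hE
        simp only [e3, e4, map_zero, Finset.sum_const_zero, add_zero] at hE
        exact (smul_eq_zero.1 hE.symm).resolve_left hMk

theorem Bde (y u v) : F.B (F.de' y u) v = F.B u (F.ds y v) := by
  simp only [de'_apply, ds_apply, map_sum, LinearMap.sum_apply, F.BX, F.Bc]
theorem BRs (y l u v) : F.B (F.Rs y l u) v = F.B u (F.R y l v) := by
  simp only [Rs_apply, R_apply, map_sum, LinearMap.sum_apply, F.Be, F.Bc]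

theorem Wtds {y : Fin n} {v : V} {μ : k} (h : v ∈ F.Wt w1 μ) : F.ds y v ∈ F.Wt w1 (μ + 1) := by
  rw [ds_apply]
  refine sum_mem fun j _ => ?_
  have := F.Wte y j (F.WtP j h)
  simpa [w1] using this

theorem WtR {y l : Fin n} {v : V} {μ : k} (h : v ∈ F.Wt w1 μ) : F.R y l v ∈ F.Wt w1 μ := by
  rw [R_apply]
  refine sum_mem fun j _ => ?_
  have := F.Wte y j (F.Wtc l j h)
  simpa [w1] using this

theorem T_apply (y m v) : F.T y m v = m • v + F.de' y (F.ds y v) +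
    ∑ l ∈ Finset.univ.erase y, F.Rs y l (F.R y l v) := by simp [T]

theorem T_InL [CharZero k] (y) (m : ℕ) {v} (h : InL F v) : InL F (F.T y (m : k) v) := by
  have hds : InL F (F.ds y v) := by
    rw [ds_apply]; exact InL.sum _ _ fun j _ => .e _ _ _ (h.P _)
  have hR : ∀ l, InL F (F.R y l v) := fun l => by
    rw [R_apply]; exact InL.sum _ _ fun j _ => .e _ _ _ (h.c _ _)
  rw [T_apply]
  refine .add _ _ (.add _ _ ?_ ?_) (InL.sum _ _ fun l _ => ?_)
  · have := InL.smul (m : ℚ) v h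
    simpa using this
  · rw [de'_apply]; exact InL.sum _ _ fun j _ => .X _ _ (hds.c _ _)
  · rw [Rs_apply]; exact InL.sum _ _ fun j _ => .e _ _ _ ((hR l).c _ _)

theorem T_pos [CharZero k] (y) (m : ℕ) (hm : 0 < m) (N : ℕ) {v} (h : InL F v)
    (hN : v ∈ F.Wt w1 (N : k)) (h0 : F.B (F.T y (m : k) v) v = 0) : v = 0 := by
  have hds : InL F (F.ds y v) := by
    rw [ds_apply]; exact InL.sum _ _ fun j _ => .e _ _ _ (h.P _)
  have hR : ∀ l, InL F (F.R y l v) := fun l => by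
    rw [R_apply]; exact InL.sum _ _ fun j _ => .e _ _ _ (h.c _ _)
  obtain ⟨r, r0, r1, r2⟩ := F.posdef (N+1) N v (by simp) h (by simpa using hN)
  obtain ⟨s, s0, s1, s2⟩ := F.posdef (N+2) (N+1) _ (by push_cast; linarith) hds
    (by have := F.Wtds (y := y) hN; push_cast; exact this)
  have := fun l => F.posdef (N+1) N _ (by simp) (hR l)
    (by have := F.WtR (y := y) (l := l) hN; push_cast; exact this)
  choose t t0 t1 t2 using this
  simp only [T_apply, map_add, map_sum, LinearMap.add_apply, LinearMap.sum_apply, Bde, BRs, map_smul,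
    LinearMap.smul_apply, r1, s1, t1, smul_eq_mul] at h0
  have h1 : (m : ℚ) * r + s + ∑ l ∈ Finset.univ.erase y, t l = 0 := by exact_mod_cast h0
  have h2 := Finset.sum_nonneg fun l (_ : l ∈ Finset.univ.erase y) => t0 l
  have hm' : (0:ℚ) < m := by exact_mod_cast hm
  have h3 : 0 ≤ (m:ℚ) * r := by positivity
  have h4 : (m:ℚ) * r = 0 := by linarith
  exact r2 ((mul_eq_zero.1 h4).resolve_left hm'.ne')

theorem span_InL [CharZero k] (N : ℕ) :
    F.Wt w1 (N : k) ≤ Submodule.span k {v | InL F v ∧ v ∈ F.Wt w1 (N : k)} := by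
  have hind : iSupIndep (fun m : ℕ => F.Wt w1 (m : k)) :=
    (F.Wt_indep w1).comp Nat.cast_injective
  refine eq_of_indep (fun m : ℕ => F.Wt w1 (m : k))
    (fun m : ℕ => Submodule.span k {v | InL F v ∧ v ∈ F.Wt w1 (m : k)}) hind ?_ ?_ N
  · intro m; exact Submodule.span_le.2 fun v hv => hv.2
  · rw [eq_top_iff]; intro v _
    refine F.ind _ ?_ ?_ ?_ v
    · exact Submodule.mem_iSup_of_mem 0 (Submodule.subset_span ⟨.vac, by simpa using F.Wt1 w1⟩)
    · intro i v hv
      induction hv using Submodule.iSup_induction' with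
      | mem m x hx =>
        refine Submodule.mem_iSup_of_mem (m + 1) ?_
        induction hx using Submodule.span_induction with
        | mem x h => exact Submodule.subset_span ⟨.X _ _ h.1, by simpa [w1] using F.WtX i h.2⟩
        | zero => simp
        | add x y _ _ hx hy => rw [map_add]; exact add_mem hx hy
        | smul a x _ h => rw [map_smul]; exact Submodule.smul_mem _ _ h
      | zero => simp
      | add x y _ _ hx hy => rw [map_add]; exact add_mem hx hy
    · intro i j v hv
      induction hv using Submodule.iSup_induction' with
      | mem m x hx =>
        refine Submodule.mem_iSup_of_mem (m + 1 + 1) ?_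
        induction hx using Submodule.span_induction with
        | mem x h => exact Submodule.subset_span ⟨.e _ _ _ h.1, by simpa [w1] using F.Wte i j h.2⟩
        | zero => simp
        | add x y _ _ hx hy => rw [map_add]; exact add_mem hx hy
        | smul a x _ h => rw [map_smul]; exact Submodule.smul_mem _ _ h
      | zero => simp
      | add x y _ _ hx hy => rw [map_add]; exact add_mem hx hy

theorem T_inj [CharZero k] (y) (m : ℕ) (hm : 0 < m) (N : ℕ) {v} (hN : v ∈ F.Wt w1 (N : k))
    (h0 : F.T y (m : k) v = 0) : v = 0 := by
  classical
  let b := Module.Basis.ofVectorSpace ℚ k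
  have hdec : ∀ v ∈ Submodule.span k {v | InL F v ∧ v ∈ F.Wt w1 (N : k)},
      ∃ l : _ →₀ V, (∀ j, InL F (l j) ∧ l j ∈ F.Wt w1 (N : k)) ∧
      v = l.sum (fun j x => b j • x) := by
    intro v hv
    induction hv using Submodule.closure_induction with
    | zero => exact ⟨0, fun j => ⟨.zero, by simp⟩, by simp⟩
    | add x y _ _ hx hy =>
      obtain ⟨l, hl, rfl⟩ := hx
      obtain ⟨l', hl', rfl⟩ := hy
      refine ⟨l + l', fun j => ⟨.add _ _ (hl j).1 (hl' j).1, add_mem (hl j).2 (hl' j).2⟩, ?_⟩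
      rw [Finsupp.sum_add_index'] <;> simp
    | smul_mem a x hx =>
      refine ⟨(b.repr a).mapRange (fun r : ℚ => (r : k) • x) (by simp), fun j => ?_, ?_⟩
      · rw [Finsupp.mapRange_apply]
        exact ⟨.smul _ _ hx.1, Submodule.smul_mem _ _ hx.2⟩
      · rw [Finsupp.sum_mapRange_index (by simp)]
        conv_lhs => rw [← b.linearCombination_repr a, Finsupp.linearCombination_apply, Finsupp.sum,
          Finset.sum_smul]
        refine Finset.sum_congr rfl fun i _ => ?_
        dsimp only
        rw [Rat.smul_def, smul_smul, mul_comm]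
  obtain ⟨l, hl, hv⟩ := hdec v (F.span_InL N hN)
  have hz : ∀ j, l j = 0 := by
    intro j
    refine F.T_pos y m hm N (hl j).1 (hl j).2 ?_
    have h1 : F.B (F.T y (m : k) v) (l j) = 0 := by rw [h0]; simp
    have hr : ∀ i, ∃ r : ℚ, F.B (F.T y (m : k) (l i)) (l j) = r := fun i =>
      (F.T_InL y m (hl i).1).B (hl j).1
    choose r hr using hr
    have h2 : ∑ i ∈ l.support, r i • b i = 0 := by
      rw [← h1, hv, Finsupp.sum]
      simp only [map_sum, map_smul, LinearMap.sum_apply, LinearMap.smul_apply, hr]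
      refine Finset.sum_congr rfl fun i _ => ?_
      rw [Rat.smul_def, smul_eq_mul, mul_comm]
    have h3 := linearIndependent_iff'.1 b.linearIndependent _ _ h2
    by_cases hj : j ∈ l.support
    · rw [hr, h3 j hj]; simp
    · rw [Finsupp.notMem_support_iff.1 hj]; simp
  rw [hv]
  simp [Finsupp.sum, hz]

end Fock
end Kz

namespace Kz
namespace Fock
variable {V : Type} [AddCommGroup V] [Module k V] (F : Fock k n V)

theorem Wt_fin [CharZero k] (N : ℕ) : ∀ M : ℤ, M < N → FiniteDimensional k (F.Wt w1 (M : k)) := by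
  induction N with
  | zero => intro M hM; rw [F.Wt_neg _ _ (by simpa using hM)]; infer_instance
  | succ N ih =>
    intro M hM
    rcases lt_trichotomy M 0 with h0 | h0 | h0
    · rw [F.Wt_neg _ _ h0]; infer_instance
    · subst h0
      refine Submodule.finiteDimensional_of_le (S₂ := Submodule.span k {F.vac}) fun v hv => ?_
      rw [F.Wt0 v (by simpa using hv)]
      exact Submodule.smul_mem _ _ (Submodule.mem_span_singleton_self _)
    · have i1 := ih (M - 1) (by push_cast at hM; omega)
      have i2 := ih (M - 1 - 1) (by push_cast at hM; omega)
      refine Submodule.finiteDimensional_of_le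
        (S₂ := (⨆ i, (F.Wt w1 ((M - 1 : ℤ) : k)).map (F.X i)) ⊔
          (⨆ i, ⨆ j, (F.Wt w1 ((M - 1 - 1 : ℤ) : k)).map (F.e i j))) fun v hv => ?_
      have hE := F.mem_Wt.1 hv
      have hMk : (M : k) ≠ 0 := by exact_mod_cast h0.ne'
      have : v = (M : k)⁻¹ • F.Ew w1 v := by rw [hE, smul_smul, inv_mul_cancel₀ hMk, one_smul]
      rw [this, Ew_w1]
      refine Submodule.smul_mem _ _ (Submodule.add_mem_sup ?_ ?_)
      · refine sum_mem fun i _ => Submodule.mem_iSup_of_mem i (Submodule.mem_map_of_mem ?_)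
        have := F.WtP i hv
        simpa [w1] using this
      · refine sum_mem fun i _ => sum_mem fun j _ => Submodule.mem_iSup_of_mem i
          (Submodule.mem_iSup_of_mem j (Submodule.mem_map_of_mem ?_))
        have := F.Wtc i j hv
        simpa [w1] using this

theorem prEw (w y v) : F.pr y (F.Ew w v) = F.Ew w (F.pr y v) := by
  refine F.ext' (F.pr y ∘ₗ F.Ew w) (F.Ew w ∘ₗ F.pr y) ?_ ?_ ?_ v
  · simp [F.pr1, Ew1]
  · intro l v h; simp only [LinearMap.comp_apply] at h ⊢
    by_cases hj : l = y
    · subst hj; simp [F.prX0, F.EwX]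
    · simp [F.prX _ _ _ hj, F.EwX, h]
  · intro a b v h; simp only [LinearMap.comp_apply] at h ⊢
    by_cases hj : a = y ∧ b = y
    · obtain ⟨rfl, rfl⟩ := hj
      simp [F.Ewe, F.pre0]
    · simp [F.pre _ _ _ _ hj, F.Ewe, h]

theorem Wtpr {w μ v} (y) (h : v ∈ F.Wt w μ) : F.pr y v ∈ F.Wt w μ := by
  rw [mem_Wt] at *; rw [← prEw, h, map_smul]

/-- the product of `e_{y j}` -/
def om (y : Fin n) : List (Fin n) → V →ₗ[k] V
  | [] => LinearMap.id
  | j :: l => F.e y j ∘ₗ om y l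

theorem om_append (y l j p) : F.om y (l ++ [j]) p = F.om y l (F.e y j p) := by
  induction l with
  | nil => simp [om]
  | cons a l ih => simp [om, ih]

theorem d_eq_d' (y v) (h : ∀ j, F.c y j v = 0) : F.d v = F.d' y v := by
  rw [d, d', dd_apply, dd_apply]
  congr 1
  refine Finset.sum_congr rfl fun i _ => Finset.sum_congr rfl fun j _ => ?_
  by_cases hi : i = y
  · subst hi; simp [h]
  · by_cases hj : j = y
    · subst hj; rw [F.cs]; simp [h]
    · simp [ch1 hi, ch1 hj]

section main
variable [CharZero k] (AB : Submodule k V)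

theorem step4 (N : ℕ)
    (hIH : ∀ (M : ℤ) (p : V), M < N → p ∈ F.Wt w1 (M : k) → F.d p = 0 → p ∈ AB) (y : Fin n)
    (hz : ∀ l : List (Fin n), ∃ z : V →ₗ[k] V, (∀ p ∈ AB, z p ∈ AB) ∧
      (∀ p, F.d p = 0 → F.d (z p) = 0) ∧ ∀ p, z p - F.X y (F.om y l p) ∈ F.J y)
    (s : ℕ) : ∀ (l : List (Fin n)) (M : ℤ) (p : V), M < N → F.c y y p = 0 →
      p ∈ F.Wt (wy y) (s : k) → F.d' y p = 0 → F.P y p = 0 → p ∈ F.Wt w1 (M : k) →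
      ∃ x ∈ AB, F.d x = 0 ∧ x - F.X y (F.om y l p) ∈ F.J y := by
  induction s with
  | zero =>
    intro l M p hM hc hE hd' hP hp
    have hcz : ∀ j, F.c y j p = 0 := by
      intro j
      by_cases hj : j = y
      · rw [hj, hc]
      · have := F.Wtc y j hE
        simp only [wy, if_true, hj, if_false] at this
        have h2 : F.c y j p ∈ F.Wt (wy y) ((-1 : ℤ) : k) := by simpa using this
        rw [F.Wt_neg _ _ (by norm_num)] at h2
        simpa using h2
    have hd := F.d_eq_d' y p hcz
    rw [hd'] at hd
    obtain ⟨z, z1, z2, z3⟩ := hz l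
    exact ⟨z p, z1 _ (hIH M p hM hp hd), z2 _ hd, z3 _⟩
  | succ s ih =>
    intro l M p hM hc hE hd' hP hp
    have : ∀ j ∈ Finset.univ.erase y, ∃ x ∈ AB, F.d x = 0 ∧
        x - F.X y (F.om y l (F.e y j (F.c y j p))) ∈ F.J y := by
      intro j hj
      have hj := Finset.ne_of_mem_erase hj
      have := ih (l ++ [j]) (M - 1 - 1) (F.c y j p) (by omega) (by rw [F.cc, hc]; simp) ?_ ?_ ?_ ?_
      · simpa only [om_append] using this
      · have := F.Wtc y j hE
        simpa [wy, hj] using this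
      · have := F.cdd (ch k y) y j p
        change F.c y j (F.d' y p) = - F.d' y (F.c y j p) at this
        rw [hd'] at this
        simpa using this.symm
      · rw [F.Pc, hP, map_zero]
      · have := F.Wtc y j hp
        simpa [w1] using this
    choose! x hx1 hx2 hx3 using this
    have hs : ((s : k) + 1) ≠ 0 := by exact_mod_cast Nat.succ_ne_zero s
    have hpe : p = ((s : k) + 1)⁻¹ • ∑ j ∈ Finset.univ.erase y, F.e y j (F.c y j p) := by
      have h := F.mem_Wt.1 hE
      rw [Ew_wy] at h
      rw [sum_ec, hc, hP, h, map_zero, map_zero, sub_zero, sub_zero, smul_smul]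
      push_cast
      rw [inv_mul_cancel₀ hs, one_smul]
    refine ⟨((s : k) + 1)⁻¹ • ∑ j ∈ Finset.univ.erase y, x j,
      Submodule.smul_mem _ _ (sum_mem fun j hj => hx1 j hj), ?_, ?_⟩
    · rw [map_smul, map_sum, Finset.sum_eq_zero fun j hj => hx2 j hj, smul_zero]
    · have : ((s : k) + 1)⁻¹ • ∑ j ∈ Finset.univ.erase y, x j - F.X y (F.om y l p) =
        ((s : k) + 1)⁻¹ • ∑ j ∈ Finset.univ.erase y,
          (x j - F.X y (F.om y l (F.e y j (F.c y j p)))) := by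
        conv_lhs => rw [hpe]
        simp only [map_smul, map_sum, Finset.sum_sub_distrib, smul_sub]
      rw [this]
      exact Submodule.smul_mem _ _ (sum_mem fun j hj => hx3 j hj)

/-- cycles of given weights -/
def Z (y : Fin n) (N m : ℕ) : Submodule k V :=
  LinearMap.ker F.d ⊓ (F.Wt w1 (N : k) ⊓ F.Wt (wy y) (m : k))

theorem mem_Z {y N m v} : v ∈ F.Z y N m ↔
    F.d v = 0 ∧ v ∈ F.Wt w1 (N : k) ∧ v ∈ F.Wt (wy y) (m : k) := by
  simp [Z, Submodule.mem_inf]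

theorem Z_big (y N m v) (h : N < m) (hv : v ∈ F.Z y N m) : v = 0 := by
  obtain ⟨-, h1, h2⟩ := F.mem_Z.1 hv
  have : v ∈ F.Wt (fun i => if i = y then 0 else 1) (((N : ℤ) - m : ℤ) : k) := by
    rw [mem_Wt] at *
    have hs : ∀ v, F.Ew (fun i => if i = y then 0 else 1) v = F.Ew w1 v - F.Ew (wy y) v := by
      intro v
      simp only [Ew_apply, ← Finset.sum_sub_distrib, ← sub_smul]
      refine Finset.sum_congr rfl fun i _ => ?_
      by_cases hi : i = y <;> simp [w1, wy, hi]
    rw [hs, h1, h2]; push_cast; module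
  rw [F.Wt_neg _ _ (by omega)] at this
  simpa using this

theorem XX'_apply (y v) : F.XX' y v =
    ∑ l ∈ Finset.univ.erase y, F.E l y (F.E y l v) - F.d (F.ds y (F.P y v)) := by simp [XX']

theorem Z_Eyl (y l N m v) (hl : l ≠ y) (hv : v ∈ F.Z y N m) : F.E y l v ∈ F.Z y N (m + 1) := by
  obtain ⟨h0, h1, h2⟩ := F.mem_Z.1 hv
  refine F.mem_Z.2 ⟨by rw [← Ed, h0, map_zero], ?_, ?_⟩
  · simpa [w1] using F.WtE y l h1
  · simpa [wy, hl] using F.WtE y l h2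

theorem Z_Ely (y l N m v) (hl : l ≠ y) (hv : v ∈ F.Z y N (m + 1)) : F.E l y v ∈ F.Z y N m := by
  obtain ⟨h0, h1, h2⟩ := F.mem_Z.1 hv
  refine F.mem_Z.2 ⟨by rw [← Ed, h0, map_zero], ?_, ?_⟩
  · simpa [w1] using F.WtE l y h1
  · simpa [wy, hl] using F.WtE l y h2

theorem Z_XX (y N m v) (hv : v ∈ F.Z y N m) : F.XX' y v ∈ F.Z y N m := by
  rw [XX'_apply]
  refine sub_mem (sum_mem fun l hl => ?_) ?_
  · have hl := Finset.ne_of_mem_erase hl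
    exact F.Z_Ely _ _ _ _ _ hl (F.Z_Eyl _ _ _ _ _ hl hv)
  · obtain ⟨h0, h1, h2⟩ := F.mem_Z.1 hv
    refine F.mem_Z.2 ⟨F.d_d _, F.Wtd ?_, F.Wtd ?_⟩
    · have := F.Wtds (y := y) (F.WtP y h1)
      simpa [w1] using this
    · rw [ds_apply]
      refine sum_mem fun j hj => ?_
      have hj := Finset.ne_of_mem_erase hj
      have := F.Wte y j (F.WtP j (F.WtP y h2))
      simpa [wy, hj] using this

theorem stepm (hd : ∀ w, F.d w ∈ AB) (hE : ∀ a b v, v ∈ AB → F.E a b v ∈ AB) (N : ℕ)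
    (hIH : ∀ (M : ℤ) (p : V), M < N → p ∈ F.Wt w1 (M : k) → F.d p = 0 → p ∈ AB) (y : Fin n)
    (hz : ∀ l : List (Fin n), ∃ z : V →ₗ[k] V, (∀ p ∈ AB, z p ∈ AB) ∧
      (∀ p, F.d p = 0 → F.d (z p) = 0) ∧ ∀ p, z p - F.X y (F.om y l p) ∈ F.J y)
    (t : ℕ) : ∀ m c, 0 < m → N < m + t → c ∈ F.Z y N m → c ∈ AB := by
  induction t with
  | zero => intro m c _ h hc; rw [F.Z_big _ _ _ _ (by simpa using h) hc]; exact zero_mem _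
  | succ t ih =>
    intro m c hm hN hc
    have hXX : ∀ c ∈ F.Z y N m, F.XX' y c ∈ AB := by
      intro c hc
      rw [XX'_apply]
      refine sub_mem (sum_mem fun l hl => hE _ _ _ ?_) (hd _)
      exact ih (m + 1) _ (by omega) (by omega) (F.Z_Eyl _ _ _ _ _ (Finset.ne_of_mem_erase hl) hc)
    have hT : ∀ c ∈ F.Z y N m, F.pr y (F.XX' y c) = F.T y (m : k) (F.pr y c) := by
      intro c hc
      obtain ⟨h0, h1, h2⟩ := F.mem_Z.1 hc
      refine F.prXX y c m h0 ?_
      rw [mem_Wt, Ew_wy] at h2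
      exact h2
    let Q := (F.Z y N m).map (F.pr y)
    have hQW : Q ≤ F.Wt w1 (N : k) := by
      rintro _ ⟨c, hc, rfl⟩
      exact F.Wtpr y (F.mem_Z.1 hc).2.1
    have hQT : ∀ v ∈ Q, F.T y (m : k) v ∈ Q := by
      rintro _ ⟨c, hc, rfl⟩
      exact ⟨_, F.Z_XX _ _ _ _ hc, hT c hc⟩
    have hfin : FiniteDimensional k (F.Wt w1 (N : k)) := by
      have h := F.Wt_fin (N + 1) N (by simp)
      have e : (((N : ℤ)) : k) = (N : k) := by simp
      exact e ▸ h
    have hQfin : FiniteDimensional k Q := Submodule.finiteDimensional_of_le hQW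
    have hinj : Function.Injective ((F.T y (m : k)).restrict hQT) := by
      rw [← LinearMap.ker_eq_bot, LinearMap.ker_eq_bot']
      rintro ⟨v, hv⟩ h
      have h' : F.T y (m : k) v = 0 := congrArg Subtype.val h
      exact Subtype.ext (F.T_inj y m hm N (hQW hv) h')
    obtain ⟨⟨_, c', hc', rfl⟩, hc2⟩ := LinearMap.injective_iff_surjective.1 hinj
      ⟨F.pr y c, c, hc, rfl⟩
    have hc3 : F.T y (m : k) (F.pr y c') = F.pr y c := congrArg Subtype.val hc2
    have hc0 : c - F.XX' y c' ∈ F.Z y N m := sub_mem hc (F.Z_XX _ _ _ _ hc')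
    have hpr : F.pr y (c - F.XX' y c') = 0 := by rw [map_sub, hT _ hc', hc3, sub_self]
    suffices c - F.XX' y c' ∈ AB by
      have := add_mem this (hXX c' hc')
      simpa using this
    generalize c - F.XX' y c' = c0 at hc0 hpr
    obtain ⟨h0, h1, h2⟩ := F.mem_Z.1 hc0
    obtain ⟨m, rfl⟩ : ∃ m', m = m' + 1 := ⟨m - 1, by omega⟩
    obtain ⟨x, hx1, hx2, hx3⟩ := F.step4 AB N hIH y hz m [] (N - 1) (F.pr y (F.P y c0)) (by omega)
      (F.cpr0 _ _) (by simpa [wy] using F.Wtpr y (F.WtP y h2))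
      (by rw [F.d'pr _ _ h0, hpr]; simp) (F.Ppr0 _ _)
      (by simpa [w1] using F.Wtpr y (F.WtP y h1))
    have h3 := F.pr_J y c0
    rw [hpr, sub_zero] at h3
    have h4 : c0 - x ∈ F.J y := by
      have := sub_mem h3 hx3
      simpa [om] using this
    obtain ⟨w, hw⟩ := F.J_boundary y _ h4 (by rw [map_sub, h0, hx2, sub_zero])
    rw [sub_eq_iff_eq_add] at hw
    rw [hw]
    exact add_mem (hd _) hx1

theorem main (h1 : F.vac ∈ AB) (hd : ∀ w, F.d w ∈ AB) (hE : ∀ a b v, v ∈ AB → F.E a b v ∈ AB)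
    (hz : ∀ (y : Fin n) (l : List (Fin n)), ∃ z : V →ₗ[k] V, (∀ p ∈ AB, z p ∈ AB) ∧
      (∀ p, F.d p = 0 → F.d (z p) = 0) ∧ ∀ p, z p - F.X y (F.om y l p) ∈ F.J y)
    (c : V) (hc : F.d c = 0) : c ∈ AB := by
  have key : ∀ N : ℕ, ∀ (M : ℤ) (p : V), M < N → p ∈ F.Wt w1 (M : k) → F.d p = 0 → p ∈ AB := by
    intro N
    induction N with
    | zero =>
      intro M p hM hp _
      rw [F.Wt_neg _ _ (by simpa using hM)] at hp
      have : p = 0 := by simpa using hp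
      rw [this]; exact zero_mem _
    | succ N ih =>
      intro M p hM hp hdp
      by_cases hMN : M < N
      · exact ih M p hMN hp hdp
      have : M = N := by push_cast at hM; omega
      subst this
      by_cases hN : N = 0
      · subst hN
        rw [F.Wt0 p (by simpa using hp)]
        exact Submodule.smul_mem _ _ h1
      have hyy : ∀ y, F.Ew (wy y) p ∈ AB := by
        intro y
        have := F.Wt_le_of_inv (wy y) (LinearMap.ker F.d ⊓ F.Wt w1 (N : k)) ?_
          (AB.comap (F.Ew (wy y))) ?_
        · exact this ⟨hdp, by simpa using hp⟩
        · rintro v ⟨hv1, hv2⟩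
          have hv1 : F.d v = 0 := hv1
          refine ⟨?_, ?_⟩
          · change F.d _ = 0
            rw [← Ewd, hv1, map_zero]
          · rw [Ew_wy]; simpa using F.WtE y y hv2
        · rintro m v ⟨⟨hv1, hv2⟩, hv3⟩
          rw [Submodule.mem_comap, F.mem_Wt.1 hv3]
          by_cases hm : m = 0
          · subst hm; simp
          · refine Submodule.smul_mem _ _ ?_
            exact F.stepm AB hd hE N ih y (hz y) (N + 1) m v (by omega) (by omega)
              (F.mem_Z.2 ⟨hv1, hv2, hv3⟩)
      have hsum : F.Ew w1 p = ∑ y, F.Ew (wy y) p := by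
        simp only [Ew_wy]; simp [Ew_apply, w1]
      rw [F.mem_Wt.1 hp] at hsum
      have h2 : ((N : ℤ) : k) • p ∈ AB := by rw [hsum]; exact sum_mem fun y _ => hyy y
      have hk : ((N : ℤ) : k) ≠ 0 := by exact_mod_cast hN
      have := AB.smul_mem ((N : ℤ) : k)⁻¹ h2
      rwa [smul_smul, inv_mul_cancel₀ hk, one_smul] at this
  have := F.Wt_le_of_inv w1 (LinearMap.ker F.d) ?_ AB ?_
  · exact this hc
  · intro v hv
    have hv : F.d v = 0 := hv
    change F.d _ = 0
    rw [← Ewd, hv, map_zero]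
  · rintro m v ⟨hv1, hv2⟩
    exact key (m + 1) m v (by simp) (by simpa using hv2) hv1

end main
end Fock
end Kz

namespace Kz

abbrev La (k : Type) [Field k] (n : ℕ) := ExteriorAlgebra k (S2 k n)

theorem kext {U : Type*} [AddCommGroup U] [Module k U] (F G : KK k n →ₗ[k] U)
    (h : ∀ s ω, F (s ⊗ₜ[k] ω) = G (s ⊗ₜ[k] ω)) (v : KK k n) : F v = G v :=
  LinearMap.congr_fun (TensorProduct.ext' h) v

/-- second derivatives on quadratic forms -/
def ff (i j : Fin n) : Module.Dual k (S2 k n) :=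
  (MvPolynomial.aeval (fun _ : Fin n => (0:k)) : S k n →ₐ[k] k).toLinearMap ∘ₗ
    (pderiv i : Derivation k (S k n) (S k n)).toLinearMap ∘ₗ
    (pderiv j : Derivation k (S k n) (S k n)).toLinearMap ∘ₗ (S2 k n).subtype

theorem ff_apply (i j : Fin n) (m : S2 k n) : ff i j m =
    constantCoeff (pderiv i (pderiv j (m : S k n))) := by
  simp [ff, MvPolynomial.aeval_zero']

theorem q_val (i j : Fin n) : ((q i j : S2 k n) : S k n) = X i * X j := rfl

theorem q_comm (i j : Fin n) : (q i j : S2 k n) = q j i := by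
  apply Subtype.ext; rw [q_val, q_val, mul_comm]

theorem pderivX (i j : Fin n) : pderiv i (X j : S k n) = C (dl k i j) := by
  rw [pderiv_X, dl]; by_cases h : i = j
  · subst h; simp
  · simp [h, Pi.single_apply, Ne.symm h]

theorem ff_q (i j a b : Fin n) : ff i j (q a b : S2 k n) =
    dl k i a * dl k j b + dl k i b * dl k j a := by
  rw [ff_apply, q_val]
  simp only [Derivation.leibniz, pderivX, smul_eq_mul, map_add, map_mul, pderiv_C, mul_zero,
    zero_add, add_zero, constantCoeff_C, constantCoeff_X, zero_mul]
  ring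

theorem ff_comm (i j : Fin n) : (ff i j : Module.Dual k (S2 k n)) = ff j i := by
  ext m
  rw [ff_apply, ff_apply]
  have : pderiv (R := k) i (pderiv (R := k) j (m : S k n)) =
      pderiv (R := k) j (pderiv (R := k) i (m : S k n)) := by
    rw [← sub_eq_zero]
    have h : ⁅(pderiv i : Derivation k (S k n) (S k n)), (pderiv j : Derivation k (S k n) (S k n))⁆ = 0 := by
      apply MvPolynomial.derivation_ext
      intro l
      rw [Derivation.commutator_apply, pderivX, pderivX]
      simp
    have := congrArg (fun D : Derivation k (S k n) (S k n) => D (m : S k n)) h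
    simpa [Derivation.commutator_apply] using this
  rw [this]

theorem S2_exp [CharZero k] (m : S2 k n) : m = (1/2 : k) • ∑ i, ∑ j, ff i j m • q i j := by
  have h2 : (2:k) • m = ∑ i, ∑ j, ff i j m • q i j := by
    apply Subtype.ext
    have hm := (mem_homogeneousSubmodule 2 (m : S k n)).1 m.2
    have e1 := hm.sum_X_mul_pderiv
    have hd1 : ∀ i, (pderiv i (m : S k n)).IsHomogeneous 1 := fun i => hm.pderiv
    have hd0 : ∀ i j, (pderiv j (pderiv i (m : S k n))).IsHomogeneous 0 := fun i j => (hd1 i).pderiv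
    have e3 : ∀ i j, pderiv j (pderiv i (m : S k n)) = C (ff j i m) := by
      intro i j
      rw [ff_apply]
      exact totalDegree_eq_zero_iff_eq_C.1 (by
        have := (hd0 i j).totalDegree_le
        omega)
    simp only [Submodule.coe_smul, Submodule.coe_sum, q_val]
    rw [show (2:k) • (m : S k n) = (2:ℕ) • (m : S k n) by rw [two_smul, two_nsmul], ← e1]
    refine Finset.sum_congr rfl fun i _ => ?_
    have e2 := (hd1 i).sum_X_mul_pderiv
    rw [one_smul] at e2
    rw [← e2, Finset.mul_sum]
    refine Finset.sum_congr rfl fun j _ => ?_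
    rw [e3, ff_comm, smul_eq_C_mul]; ring
  rw [← h2, smul_smul]; norm_num

def XK (i : Fin n) : KK k n →ₗ[k] KK k n := LinearMap.rTensor (La k n) (LinearMap.mulLeft k (X i))
def PK (i : Fin n) : KK k n →ₗ[k] KK k n :=
  LinearMap.rTensor (La k n) (pderiv i : Derivation k (S k n) (S k n)).toLinearMap
def eK (a b : Fin n) : KK k n →ₗ[k] KK k n :=
  LinearMap.lTensor (S k n) (LinearMap.mulLeft k (ExteriorAlgebra.ι k (q a b)))
def cL (f : Module.Dual k (S2 k n)) : La k n →ₗ[k] La k n :=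
  CliffordAlgebra.contractLeft (Q := (0 : QuadraticForm k (S2 k n))) f
def cK (a b : Fin n) : KK k n →ₗ[k] KK k n := LinearMap.lTensor (S k n) (cL (ff a b))

theorem XK_t (i : Fin n) (s : S k n) (ω : La k n) : XK i (s ⊗ₜ[k] ω) = (X i * s) ⊗ₜ[k] ω := rfl
theorem PK_t (i : Fin n) (s : S k n) (ω : La k n) : PK i (s ⊗ₜ[k] ω) = (pderiv i s) ⊗ₜ[k] ω := rfl
theorem eK_t (a b : Fin n) (s : S k n) (ω : La k n) :
  eK a b (s ⊗ₜ[k] ω) = s ⊗ₜ[k] (ExteriorAlgebra.ι k (q a b) * ω) := rfl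
theorem cK_t (a b : Fin n) (s : S k n) (ω : La k n) :
  cK a b (s ⊗ₜ[k] ω) = s ⊗ₜ[k] (cL (ff a b) ω) := rfl

theorem cL_ι (f : Module.Dual k (S2 k n)) (m : S2 k n) (ω : La k n) :
    cL f (ExteriorAlgebra.ι k m * ω) = f m • ω - ExteriorAlgebra.ι k m * cL f ω :=
  CliffordAlgebra.contractLeft_ι_mul _ _ _

theorem cL_1 (f : Module.Dual k (S2 k n)) : cL f (1 : La k n) = 0 :=
  CliffordAlgebra.contractLeft_one _ _
theorem cL_cL (f : Module.Dual k (S2 k n)) (ω : La k n) : cL f (cL f ω) = 0 :=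
  CliffordAlgebra.contractLeft_contractLeft _ _
theorem cL_comm (f g : Module.Dual k (S2 k n)) (ω : La k n) : cL f (cL g ω) = - cL g (cL f ω) :=
  CliffordAlgebra.contractLeft_comm _ _ _

theorem ind_La (p : La k n → Prop) (h1 : p 1) (hadd : ∀ a b, p a → p b → p (a + b))
    (hs : ∀ (c : k) a, p a → p (c • a))
    (hm : ∀ m a, p a → p (ExteriorAlgebra.ι k m * a)) (ω : La k n) : p ω := by
  refine CliffordAlgebra.left_induction (Q := (0 : QuadraticForm k (S2 k n))) (P := p) ?_
    hadd (fun x m h => hm m x h) ω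
  intro r
  rw [Algebra.algebraMap_eq_smul_one]
  exact hs _ _ h1

theorem ind_KK [CharZero k] (W : Submodule k (KK k n)) (h1 : (1 : S k n) ⊗ₜ[k] (1 : La k n) ∈ W)
    (hX : ∀ i v, v ∈ W → XK i v ∈ W) (he : ∀ a b v, v ∈ W → eK a b v ∈ W) (v : KK k n) : v ∈ W := by
  have key : ∀ (ω : La k n) (s : S k n), s ⊗ₜ[k] ω ∈ W := by
    intro ω
    refine ind_La (fun ω => ∀ s : S k n, s ⊗ₜ[k] ω ∈ W) ?_ ?_ ?_ ?_ ω
    · intro s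
      induction s using MvPolynomial.induction_on with
      | C a => rw [C_eq_smul_one, ← TensorProduct.smul_tmul']; exact W.smul_mem _ h1
      | add p q hp hq => rw [TensorProduct.add_tmul]; exact add_mem hp hq
      | mul_X p i h => rw [mul_comm]; exact hX i _ h
    · intro a b ha hb s
      rw [TensorProduct.tmul_add]; exact add_mem (ha s) (hb s)
    · intro c a ha s
      rw [TensorProduct.tmul_smul]; exact W.smul_mem _ (ha s)
    · intro m a ha s
      rw [S2_exp m]
      simp only [map_smul, map_sum, smul_mul_assoc, Finset.sum_mul, TensorProduct.tmul_smul,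
        TensorProduct.tmul_sum]
      exact W.smul_mem _ (sum_mem fun i _ => sum_mem fun j _ => W.smul_mem _ (he i j _ (ha s)))
  induction v using TensorProduct.induction_on with
  | zero => exact zero_mem _
  | tmul s ω => exact key ω s
  | add x y hx hy => exact add_mem hx hy

end Kz

namespace Kz

/-- bilinear form on polynomials -/
def BS : S k n →ₗ[k] S k n →ₗ[k] k :=
  (basisMonomials (Fin n) k).constr k (fun α => ((∏ j, (α j).factorial : ℕ) : k) • lcoeff k α)

theorem BS_mon (α : Fin n →₀ ℕ) (g : S k n) :
    BS (monomial α 1) g = ((∏ j, (α j).factorial : ℕ) : k) * coeff α g := by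
  have := (basisMonomials (Fin n) k).constr_basis k
    (fun α => ((∏ j, (α j).factorial : ℕ) : k) • lcoeff k α) α
  rw [coe_basisMonomials] at this
  rw [BS, this]; rfl

theorem BS_1 (g : S k n) : BS 1 g = constantCoeff g := by
  have := BS_mon (k := k) (0 : Fin n →₀ ℕ) g
  simpa [constantCoeff_eq] using this

theorem fac_aux (α : Fin n →₀ ℕ) (i : Fin n) :
    ∏ j, ((α + Finsupp.single i 1 : Fin n →₀ ℕ) j).factorial = (α i + 1) * ∏ j, (α j).factorial := by
  rw [← Finset.mul_prod_erase _ _ (Finset.mem_univ i),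
    ← Finset.mul_prod_erase Finset.univ (fun j => (α j).factorial) (Finset.mem_univ i), ← mul_assoc]
  congr 1
  · simp [Nat.factorial_succ]
  · refine Finset.prod_congr rfl fun j hj => ?_
    have : j ≠ i := Finset.ne_of_mem_erase hj
    simp [Finsupp.single_apply, this.symm]

theorem BS_X (i : Fin n) (f g : S k n) : BS (X i * f) g = BS f (pderiv i g) := by
  suffices h : BS ∘ₗ LinearMap.mulLeft k (X i : S k n) =
      (LinearMap.lcomp k k (pderiv i : Derivation k (S k n) (S k n)).toLinearMap) ∘ₗ BS from
    LinearMap.congr_fun (LinearMap.congr_fun h f) g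
  apply (basisMonomials (Fin n) k).ext
  intro α
  refine LinearMap.ext fun g => ?_
  simp only [coe_basisMonomials, LinearMap.comp_apply, LinearMap.mulLeft_apply,
    LinearMap.lcomp_apply]
  have e : (X i : S k n) * monomial α 1 = monomial (α + Finsupp.single i 1) 1 := by
    rw [monomial_add_single, pow_one, mul_comm]
  rw [e, BS_mon]
  refine Eq.trans ?_ (BS_mon α (pderiv i g)).symm
  rw [coeff_pderiv, fac_aux]
  push_cast; ring

def bq : S2 k n →ₗ[k] Module.Dual k (S2 k n) :=
  (1/2 : k) • ∑ i, ∑ j, (ff i j).smulRight (ff i j)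

theorem bq_q [CharZero k] (a b : Fin n) : bq (q a b : S2 k n) = ff a b := by
  simp only [bq, LinearMap.smul_apply, LinearMap.sum_apply, LinearMap.smulRight_apply, ff_q,
    add_smul, mul_smul, Finset.sum_add_distrib, ← Finset.smul_sum, sum_dl']
  rw [ff_comm b a, ← two_smul k (ff a b), smul_smul]; norm_num

def Lop : La k n →ₐ[k] (Module.End k (La k n))ᵐᵒᵖ :=
  ExteriorAlgebra.lift k ⟨(MulOpposite.opLinearEquiv k).toLinearMap ∘ₗ
    (CliffordAlgebra.contractLeft (Q := (0 : QuadraticForm k (S2 k n)))) ∘ₗ bq, by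
      intro m
      apply MulOpposite.unop_injective
      refine LinearMap.ext fun v => ?_
      exact cL_cL _ _⟩

theorem Lop_ι (m : S2 k n) : Lop (ExteriorAlgebra.ι k m) = MulOpposite.op (cL (bq m)) := by
  rw [Lop, ExteriorAlgebra.lift_ι_apply]; rfl

def BL : La k n →ₗ[k] La k n →ₗ[k] k :=
  LinearMap.compr₂ ((MulOpposite.opLinearEquiv k).symm.toLinearMap ∘ₗ Lop.toLinearMap)
    (ExteriorAlgebra.algebraMapInv (R := k) (M := S2 k n)).toLinearMap

theorem BL_apply (u v : La k n) : BL u v =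
    ExteriorAlgebra.algebraMapInv ((MulOpposite.unop (Lop u)) v) := rfl

theorem BL_1 (v : La k n) : BL 1 v = ExteriorAlgebra.algebraMapInv v := by
  rw [BL_apply, map_one]; rfl

theorem BL_ι (m : S2 k n) (u v : La k n) :
    BL (ExteriorAlgebra.ι k m * u) v = BL u (cL (bq m) v) := by
  rw [BL_apply, map_mul, Lop_ι]; rfl

def BK : KK k n →ₗ[k] KK k n →ₗ[k] k :=
  LinearMap.BilinForm.tmul (BS : LinearMap.BilinForm k (S k n)) (BL : LinearMap.BilinForm k (La k n))

theorem BK_t (s s' : S k n) (ω ω' : La k n) :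
    BK (s ⊗ₜ[k] ω) (s' ⊗ₜ[k] ω') = BL ω ω' * BS s s' := rfl

theorem kext2 (F G : KK k n →ₗ[k] KK k n →ₗ[k] k)
    (h : ∀ s ω s' ω', F (s ⊗ₜ[k] ω) (s' ⊗ₜ[k] ω') = G (s ⊗ₜ[k] ω) (s' ⊗ₜ[k] ω')) (u v : KK k n) :
    F u v = G u v := by
  have : F u = G u := by
    apply kext
    intro s ω
    refine LinearMap.ext fun v => ?_
    exact kext _ _ (h s ω) v
  rw [this]

def gy (y : Fin n) : S2 k n →ₗ[k] S2 k n :=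
  LinearMap.id - (1/2 : k) • (ff y y).smulRight (q y y)

theorem gy_yy [CharZero k] (y : Fin n) : gy y (q y y : S2 k n) = 0 := by
  simp only [gy, LinearMap.sub_apply, LinearMap.id_apply, LinearMap.smul_apply,
    LinearMap.smulRight_apply, ff_q, dl_self, smul_smul]
  norm_num

theorem gy_q (y a b : Fin n) (h : ¬ (a = y ∧ b = y)) : gy y (q a b : S2 k n) = q a b := by
  have : ff y y (q a b : S2 k n) = 0 := by
    rw [ff_q]
    by_cases ha : a = y
    · have hb : y ≠ b := fun hb => h ⟨ha, hb.symm⟩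
      simp [dl_ne hb]
    · simp [dl_ne (Ne.symm ha)]
  simp [gy, this]

def py (y : Fin n) : S k n →ₐ[k] S k n := aeval (fun i => if i = y then 0 else X i)

def prK (y : Fin n) : KK k n →ₗ[k] KK k n :=
  TensorProduct.map (py y).toLinearMap (ExteriorAlgebra.map (gy y)).toLinearMap

theorem prK_t (y : Fin n) (s : S k n) (ω : La k n) :
    prK y (s ⊗ₜ[k] ω) = py y s ⊗ₜ[k] ExteriorAlgebra.map (gy y) ω := rfl

theorem XK_inj (i : Fin n) : Function.Injective (XK (k := k) i) := by
  apply Module.Flat.rTensor_preserves_injective_linearMap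
  intro a b h
  exact mul_left_cancel₀ (X_ne_zero i) h

theorem ιι (m m' : S2 k n) (ω : La k n) :
    ExteriorAlgebra.ι k m * (ExteriorAlgebra.ι k m' * ω) =
    - (ExteriorAlgebra.ι k m' * (ExteriorAlgebra.ι k m * ω)) := by
  have := ExteriorAlgebra.ι_add_mul_swap (R := k) m m'
  rw [← mul_assoc, ← mul_assoc, eq_neg_of_add_eq_zero_left this, neg_mul]

def FK (k : Type) [Field k] [CharZero k] (n : ℕ) : Fock k n (KK k n) where
  X := XK
  P := PK
  e := eK
  c := cK
  vac := 1 ⊗ₜ[k] 1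
  eps := BK (1 ⊗ₜ[k] 1)
  B := BK
  pr := prK
  XX i j := kext (XK i ∘ₗ XK j) (XK j ∘ₗ XK i) fun s ω => by
    simp only [LinearMap.comp_apply, XK_t, mul_left_comm]
  PP i j := kext (k := k) (PK i ∘ₗ PK j) (PK j ∘ₗ PK i) fun s ω => by
    simp only [LinearMap.comp_apply, PK_t]
    congr 1
    have h : ⁅(pderiv i : Derivation k (S k n) (S k n)), (pderiv j : Derivation k (S k n) (S k n))⁆ = 0 := by
      apply MvPolynomial.derivation_ext
      intro l
      rw [Derivation.commutator_apply, pderivX, pderivX]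
      simp
    have := congrArg (fun D : Derivation k (S k n) (S k n) => D s) h
    rw [← sub_eq_zero]
    simpa [Derivation.commutator_apply] using this
  PX i j := kext (k := k) (PK i ∘ₗ XK j) (XK j ∘ₗ PK i + dl k i j • LinearMap.id) fun s ω => by
    simp only [LinearMap.comp_apply, PK_t, XK_t, LinearMap.add_apply, LinearMap.smul_apply,
      LinearMap.id_apply, Derivation.leibniz, pderivX, smul_eq_mul, TensorProduct.add_tmul]
    rw [mul_comm s, C_mul', TensorProduct.smul_tmul']
  Xe i a b := kext (eK a b ∘ₗ XK i) (XK i ∘ₗ eK a b) fun s ω => rfl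
  Xc i a b := kext (cK a b ∘ₗ XK i) (XK i ∘ₗ cK a b) fun s ω => rfl
  Pe i a b := kext (k := k) (PK i ∘ₗ eK a b) (eK a b ∘ₗ PK i) fun s ω => rfl
  Pc i a b := kext (k := k) (PK i ∘ₗ cK a b) (cK a b ∘ₗ PK i) fun s ω => rfl
  ee a b a' b' := kext (eK a b ∘ₗ eK a' b') (-(eK a' b' ∘ₗ eK a b)) fun s ω => by
    simp only [LinearMap.comp_apply, LinearMap.neg_apply, eK_t]
    rw [ιι, TensorProduct.tmul_neg]
  cc a b a' b' := kext (cK a b ∘ₗ cK a' b') (-(cK a' b' ∘ₗ cK a b)) fun s ω => by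
    simp only [LinearMap.comp_apply, LinearMap.neg_apply, cK_t]
    rw [cL_comm, TensorProduct.tmul_neg]
  ce a b a' b' := kext (k := k) (cK a b ∘ₗ eK a' b')
      ((dl k a a' * dl k b b' + dl k a b' * dl k b a') • LinearMap.id - eK a' b' ∘ₗ cK a b)
      fun s ω => by
    simp only [LinearMap.comp_apply, LinearMap.sub_apply, LinearMap.smul_apply, LinearMap.id_apply,
      cK_t, eK_t, cL_ι, ff_q, TensorProduct.tmul_sub, TensorProduct.tmul_smul]
  es a b v := by simp only [eK, q_comm a b]
  cs a b v := by simp only [cK, ff_comm a b]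
  P1 i := by rw [PK_t, Derivation.map_one_eq_zero, TensorProduct.zero_tmul]
  c1 a b := by rw [cK_t, cL_1, TensorProduct.tmul_zero]
  eps1 := by rw [BK_t, BL_1, BS_1]; simp
  epsX i := kext (BK (1 ⊗ₜ[k] 1) ∘ₗ XK i) 0 fun s ω => by
    rw [LinearMap.comp_apply, XK_t, BK_t, BS_1]; simp
  epse a b := kext (BK (1 ⊗ₜ[k] 1) ∘ₗ eK a b) 0 fun s ω => by
    rw [LinearMap.comp_apply, eK_t, BK_t, BL_1, map_mul]; simp [ExteriorAlgebra.algebraMapInv]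
  B1 v := rfl
  BX i := kext2 (BK ∘ₗ XK i) (LinearMap.lcomp k k (PK i) ∘ₗ BK) fun s ω s' ω' => by
    simp only [LinearMap.comp_apply, LinearMap.lcomp_apply]
    rw [XK_t, PK_t, BK_t, BK_t, BS_X]
  Be a b := kext2 (BK ∘ₗ eK a b) (LinearMap.lcomp k k (cK a b) ∘ₗ BK) fun s ω s' ω' => by
    simp only [LinearMap.comp_apply, LinearMap.lcomp_apply]
    rw [eK_t, cK_t, BK_t, BK_t, BL_ι, bq_q]
  Xinj i v h := XK_inj i (by rw [h, map_zero])
  pr1 y := by rw [prK_t, map_one, map_one]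
  prX0 y := kext (prK y ∘ₗ XK y) 0 fun s ω => by
    rw [LinearMap.comp_apply, XK_t, prK_t, map_mul]; simp [py]
  prX y i v h := kext (prK y ∘ₗ XK i) (XK i ∘ₗ prK y) (fun s ω => by
    rw [LinearMap.comp_apply, LinearMap.comp_apply, XK_t, prK_t, prK_t, map_mul, XK_t]
    simp [py, h]) v
  pre0 y := kext (prK y ∘ₗ eK y y) 0 fun s ω => by
    rw [LinearMap.comp_apply, eK_t, prK_t, map_mul, ExteriorAlgebra.map_apply_ι, gy_yy]; simp
  pre y a b v h := kext (prK y ∘ₗ eK a b) (eK a b ∘ₗ prK y) (fun s ω => by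
    rw [LinearMap.comp_apply, LinearMap.comp_apply, eK_t, prK_t, prK_t, map_mul,
      ExteriorAlgebra.map_apply_ι, gy_q _ _ _ h, eK_t]) v
  ind W h1 hX he v := ind_KK W h1 hX he v

end Kz

namespace Kz

local notation "ιM" => ExteriorAlgebra.ιMulti

theorem XK_eq (i : Fin n) (v : KK k n) : XK i v = (X i ⊗ₜ[k] 1 : KK k n) * v :=
  kext (XK i) (LinearMap.mulLeft k (X i ⊗ₜ[k] 1 : KK k n)) (fun s ω => by
    rw [XK_t, LinearMap.mulLeft_apply, Algebra.TensorProduct.tmul_mul_tmul, one_mul]) v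

theorem eK_eq (a b : Fin n) (v : KK k n) :
    eK a b v = (1 ⊗ₜ[k] ExteriorAlgebra.ι k (q a b) : KK k n) * v :=
  kext (eK a b) (LinearMap.mulLeft k (1 ⊗ₜ[k] ExteriorAlgebra.ι k (q a b) : KK k n)) (fun s ω => by
    rw [eK_t, LinearMap.mulLeft_apply, Algebra.TensorProduct.tmul_mul_tmul, one_mul]) v

theorem XK_mul (i : Fin n) (u v : KK k n) : XK i u * v = XK i (u * v) := by
  rw [XK_eq, XK_eq, mul_assoc]
theorem eK_mul (a b : Fin n) (u v : KK k n) : eK a b u * v = eK a b (u * v) := by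
  rw [eK_eq, eK_eq, mul_assoc]

/-- minus the identity -/
def ng : S2 k n →ₗ[k] S2 k n := (-1 : k) • LinearMap.id
theorem ng_apply (m : S2 k n) : ng m = (-1 : k) • m := rfl

/-- parity involution -/
def al : KK k n →ₗ[k] KK k n :=
  LinearMap.lTensor (S k n) (ExteriorAlgebra.map (ng : S2 k n →ₗ[k] S2 k n)).toLinearMap

theorem al_t (s : S k n) (ω : La k n) : al (s ⊗ₜ[k] ω) =
    s ⊗ₜ[k] ExteriorAlgebra.map (ng : S2 k n →ₗ[k] S2 k n) ω := rfl

theorem al_X (i : Fin n) (v : KK k n) : al (XK i v) = XK i (al v) :=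
  kext (al ∘ₗ XK i) (XK i ∘ₗ al) (fun s ω => by
    rw [LinearMap.comp_apply, LinearMap.comp_apply, XK_t, al_t, al_t, XK_t]) v

theorem al_e_aux (a b : Fin n) (s : S k n) (ω : La k n) :
    al (eK a b (s ⊗ₜ[k] ω)) = (-1 : k) • eK a b (al (s ⊗ₜ[k] ω)) := by
  rw [eK_t, al_t, al_t, map_mul, ExteriorAlgebra.map_apply_ι, ng_apply, map_smul, smul_mul_assoc,
    TensorProduct.tmul_smul, eK_t]

theorem al_e (a b : Fin n) (v : KK k n) : al (eK a b v) = (-1 : k) • eK a b (al v) := by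
  exact kext (al ∘ₗ eK a b) ((-1 : k) • (eK a b ∘ₗ al)) (al_e_aux a b) v

theorem al_M (t : ℕ) (s : S k n) (m : Fin t → S2 k n) :
    al (s ⊗ₜ[k] (ιM k t m : La k n)) = (-1 : k)^t • (s ⊗ₜ[k] (ιM k t m : La k n)) := by
  rw [al_t, ExteriorAlgebra.map_apply_ιMulti]
  have : (⇑(ng : S2 k n →ₗ[k] S2 k n) ∘ m) = fun i => (-1 : k) • m i := rfl
  rw [this, AlternatingMap.map_smul_univ (ιM k t) (fun _ => (-1 : k)) m, TensorProduct.tmul_smul]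
  simp

variable [CharZero k]

theorem vac_eq : (FK k n).vac = (1 : KK k n) := rfl

theorem leib (u v : KK k n) : (FK k n).d (u * v) = (FK k n).d u * v + al u * (FK k n).d v := by
  refine (FK k n).ext' ((FK k n).d ∘ₗ LinearMap.mulRight k v)
    (LinearMap.mulRight k v ∘ₗ (FK k n).d + LinearMap.mulRight k ((FK k n).d v) ∘ₗ al) ?_ ?_ ?_ u
  · simp only [LinearMap.mulRight_apply, LinearMap.add_apply,
      LinearMap.comp_apply, (FK k n).d1]
    rw [vac_eq, show al (1 : KK k n) = 1 by
      change al ((1 : S k n) ⊗ₜ[k] (1 : La k n)) = _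
      rw [al_t, map_one]; rfl]
    rw [one_mul, zero_mul, one_mul, zero_add]
  · intro i w hw
    change (FK k n).d (w * v) = (FK k n).d w * v + al w * (FK k n).d v at hw
    change (FK k n).d (XK i w * v) = (FK k n).d (XK i w) * v + al (XK i w) * (FK k n).d v
    have e : ∀ v, (FK k n).d (XK i v) = XK i ((FK k n).d v) := (FK k n).dX i
    rw [XK_mul, e, hw, e, al_X, XK_mul, XK_mul, map_add]
  · intro a b w hw
    change (FK k n).d (w * v) = (FK k n).d w * v + al w * (FK k n).d v at hw
    have e : ∀ v, (FK k n).d (eK a b v) = XK a (XK b v) - eK a b ((FK k n).d v) := (FK k n).de a b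
    change (FK k n).d (eK a b w * v) = (FK k n).d (eK a b w) * v + al (eK a b w) * (FK k n).d v
    rw [eK_mul, e, hw, e, al_e, sub_mul, smul_mul_assoc, eK_mul, eK_mul, XK_mul, XK_mul, map_add]
    module

theorem E_leib (α β : Fin n) (u v : KK k n) :
    (FK k n).E α β (u * v) = (FK k n).E α β u * v + u * (FK k n).E α β v := by
  refine (FK k n).ext' ((FK k n).E α β ∘ₗ LinearMap.mulRight k v)
    (LinearMap.mulRight k v ∘ₗ (FK k n).E α β + LinearMap.mulRight k ((FK k n).E α β v)) ?_ ?_ ?_ u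
  · simp only [LinearMap.mulRight_apply, LinearMap.add_apply,
      LinearMap.comp_apply, (FK k n).E1]
    rw [vac_eq, one_mul, zero_mul, one_mul, zero_add]
  · intro i w hw
    change (FK k n).E α β (w * v) = (FK k n).E α β w * v + w * (FK k n).E α β v at hw
    have e : ∀ v, (FK k n).E α β (XK i v) = XK i ((FK k n).E α β v) + dl k β i • XK α v :=
      (FK k n).EX α β i
    change (FK k n).E α β (XK i w * v) = (FK k n).E α β (XK i w) * v + XK i w * (FK k n).E α β v
    rw [XK_mul, e, hw, e, XK_mul, add_mul, smul_mul_assoc, XK_mul, XK_mul, map_add]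
    abel
  · intro a b w hw
    change (FK k n).E α β (w * v) = (FK k n).E α β w * v + w * (FK k n).E α β v at hw
    have e : ∀ v, (FK k n).E α β (eK a b v) = eK a b ((FK k n).E α β v) + dl k β a • eK α b v +
      dl k β b • eK α a v := (FK k n).Ee α β a b
    change (FK k n).E α β (eK a b w * v) = (FK k n).E α β (eK a b w) * v +
      eK a b w * (FK k n).E α β v
    rw [eK_mul, e, hw, e, eK_mul, add_mul, add_mul, smul_mul_assoc, smul_mul_assoc, eK_mul, eK_mul,
      eK_mul, map_add]
    abel

end Kz

namespace Kz
set_option linter.unusedSectionVars false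
variable [CharZero k]

local notation "ιM" => ExteriorAlgebra.ιMulti

theorem split_t (s : S k n) (m : S2 k n) (ω : La k n) :
    (s ⊗ₜ[k] (ExteriorAlgebra.ι k m * ω) : KK k n) =
      (1 ⊗ₜ[k] ExteriorAlgebra.ι k m : KK k n) * (s ⊗ₜ[k] ω) := by
  rw [Algebra.TensorProduct.tmul_mul_tmul, one_mul]

theorem d_ι (m : S2 k n) : (FK k n).d (1 ⊗ₜ[k] ExteriorAlgebra.ι k m) = (m : S k n) ⊗ₜ[k] 1 := by
  have hq : ∀ a b, (FK k n).d (1 ⊗ₜ[k] ExteriorAlgebra.ι k (q a b)) =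
      ((q a b : S2 k n) : S k n) ⊗ₜ[k] 1 := by
    intro a b
    have h := (FK k n).de a b (1 ⊗ₜ[k] 1)
    have h1 : (FK k n).d (1 ⊗ₜ[k] 1) = 0 := (FK k n).d1
    rw [h1, map_zero, sub_zero] at h
    change (FK k n).d (1 ⊗ₜ[k] (ExteriorAlgebra.ι k (q a b) * 1)) = (X a * (X b * 1)) ⊗ₜ[k] 1 at h
    rw [mul_one, mul_one] at h
    exact h
  have : ((FK k n).d ∘ₗ TensorProduct.mk k _ _ 1 ∘ₗ ExteriorAlgebra.ι k) m =
    ((TensorProduct.mk k (S k n) (La k n)).flip 1 ∘ₗ (S2 k n).subtype) m := by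
    rw [S2_exp m]
    simp only [map_smul, map_sum]
    congr 1
    refine Finset.sum_congr rfl fun i _ => Finset.sum_congr rfl fun j _ => ?_
    congr 1
    exact hq i j
  exact this

theorem al_ι (m : S2 k n) : al (1 ⊗ₜ[k] ExteriorAlgebra.ι k m : KK k n) =
    (-1 : k) • (1 ⊗ₜ[k] ExteriorAlgebra.ι k m : KK k n) := by
  rw [al_t, ExteriorAlgebra.map_apply_ι, ng_apply, map_smul, TensorProduct.tmul_smul]

theorem d_split (s : S k n) (m : S2 k n) (ω : La k n) :
    (FK k n).d (s ⊗ₜ[k] (ExteriorAlgebra.ι k m * ω)) = (s * (m : S k n)) ⊗ₜ[k] ω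
     + (-1 : k) • ((1 ⊗ₜ[k] ExteriorAlgebra.ι k m : KK k n) * (FK k n).d (s ⊗ₜ[k] ω)) := by
  rw [split_t, leib, d_ι, al_ι, Algebra.TensorProduct.tmul_mul_tmul, one_mul, smul_mul_assoc,
    mul_comm s]

theorem d_s (s : S k n) : (FK k n).d (s ⊗ₜ[k] 1) = 0 := by
  induction s using MvPolynomial.induction_on with
  | C a =>
    rw [C_eq_smul_one, ← TensorProduct.smul_tmul', map_smul]
    have h1 : (FK k n).d (1 ⊗ₜ[k] 1) = 0 := (FK k n).d1
    rw [h1, smul_zero]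
  | add p q hp hq => rw [TensorProduct.add_tmul, map_add, hp, hq, add_zero]
  | mul_X p i h =>
    rw [mul_comm]
    have := (FK k n).dX i (p ⊗ₜ[k] 1)
    rw [h, map_zero] at this
    exact this

theorem d_M (t : ℕ) (s : S k n) (m : Fin (t+1) → S2 k n) :
    (FK k n).d (s ⊗ₜ[k] (ιM k (t+1) m : La k n)) = ∑ j : Fin (t+1), ((-1:ℤ)^(j:ℕ)) •
          ((s * ((m j : S k n))) ⊗ₜ[k] (ιM k t (fun l => m (j.succAbove l)) : La k n)) := by
  induction t with
  | zero =>
    rw [ExteriorAlgebra.ιMulti_succ_apply, d_split, ExteriorAlgebra.ιMulti_zero_apply, d_s]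
    simp
  | succ t ih =>
    rw [ExteriorAlgebra.ιMulti_succ_apply, d_split, ih, Finset.mul_sum,
      Finset.smul_sum, Fin.sum_univ_succ (n := t + 1)]
    congr 1
    · simp [Matrix.vecTail, Function.comp_def]
    · refine Finset.sum_congr rfl fun j _ => ?_
      rw [mul_smul_comm, ← split_t, Fin.val_succ, pow_succ', mul_smul, neg_one_smul,
        neg_one_smul, ExteriorAlgebra.ιMulti_succ_apply (R := k) (fun l => m (j.succ.succAbove l))]
      simp [Matrix.vecTail, Function.comp_def]

theorem d_M0 (s : S k n) (m : Fin 0 → S2 k n) : (FK k n).d (s ⊗ₜ[k] (ιM k 0 m : La k n)) = 0 := by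
  rw [ExteriorAlgebra.ιMulti_zero_apply, d_s]

def d2 (α β : Fin n) (m : S2 k n) : S2 k n := ∑ l, ff β l m • q α l

theorem d2_q (α β i j : Fin n) : d2 α β (q i j : S2 k n) =
    dl k β i • q α j + dl k β j • q i α := by
  simp only [d2, ff_q, add_smul, mul_smul, Finset.sum_add_distrib, ← Finset.smul_sum, sum_dl',
    q_comm α i]

theorem E_ι (α β : Fin n) (m : S2 k n) : (FK k n).E α β (1 ⊗ₜ[k] ExteriorAlgebra.ι k m) =
    1 ⊗ₜ[k] ExteriorAlgebra.ι k (d2 α β m) := by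
  rw [Fock.E_apply]
  change XK α (PK β _) + ∑ l, eK α l (cK β l _) = _
  have hc : ∀ f, cL f (ExteriorAlgebra.ι k m) = f m • (1 : La k n) := by
    intro f
    have := cL_ι f m 1
    rwa [mul_one, cL_1, mul_zero, sub_zero] at this
  simp only [PK_t, cK_t, hc, cL_1, mul_zero, sub_zero, Derivation.map_one_eq_zero,
    TensorProduct.zero_tmul, map_zero, zero_add, TensorProduct.tmul_smul, map_smul, eK_t, mul_one,
    d2, map_sum, TensorProduct.tmul_sum]

theorem E_1 (α β : Fin n) : (FK k n).E α β (1 ⊗ₜ[k] 1) = 0 := (FK k n).E1 α β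

theorem E_M (α β : Fin n) (t : ℕ) (m : Fin t → S2 k n) :
    (FK k n).E α β (1 ⊗ₜ[k] (ιM k t m : La k n)) =
      ∑ j, 1 ⊗ₜ[k] (ιM k t (Function.update m j (d2 α β (m j))) : La k n) := by
  induction t with
  | zero => rw [ExteriorAlgebra.ιMulti_zero_apply, E_1]; simp
  | succ t ih =>
    rw [ExteriorAlgebra.ιMulti_succ_apply, split_t, E_leib, E_ι, ih, Fin.sum_univ_succ,
      Finset.mul_sum, ← split_t]
    congr 1
    · rw [ExteriorAlgebra.ιMulti_succ_apply]
      simp [Matrix.vecTail, Function.comp_def]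
    · refine Finset.sum_congr rfl fun j _ => ?_
      rw [← split_t, ExteriorAlgebra.ιMulti_succ_apply
        (R := k) (Function.update m j.succ (d2 α β (m j.succ)))]
      congr 3
      funext l
      simp [Matrix.vecTail, Function.update_apply]

theorem E_X (α β i : Fin n) :
    (FK k n).E α β (X i ⊗ₜ[k] 1) = dl k β i • ((X α : S k n) ⊗ₜ[k] (1 : La k n)) := by
  have e : ∀ v, (FK k n).E α β (XK i v) = XK i ((FK k n).E α β v) + dl k β i • XK α v :=
    (FK k n).EX α β i
  have := e (1 ⊗ₜ[k] 1)
  rwa [E_1, map_zero, zero_add, XK_t, XK_t, mul_one, mul_one] at this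

theorem E_XM (α β i : Fin n) (t : ℕ) (m : Fin t → S2 k n) :
    (FK k n).E α β (X i ⊗ₜ[k] (ιM k t m : La k n)) =
      dl k β i • (X α ⊗ₜ[k] (ιM k t m : La k n)) +
      ∑ j, X i ⊗ₜ[k] (ιM k t (Function.update m j (d2 α β (m j))) : La k n) := by
  have : ∀ (s : S k n) (ω : La k n), s ⊗ₜ[k] ω = (s ⊗ₜ[k] 1 : KK k n) * (1 ⊗ₜ[k] ω) := by
    intro s ω; rw [Algebra.TensorProduct.tmul_mul_tmul, one_mul, mul_one]
  rw [this, E_leib, E_X, E_M, smul_mul_assoc, ← this, Finset.mul_sum]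
  congr 1
  exact Finset.sum_congr rfl fun j _ => (this _ _).symm

end Kz

namespace Kz
set_option linter.unusedSectionVars false
variable [CharZero k]

local notation "ιM" => ExteriorAlgebra.ιMulti

/-- the cycles on variables -/
def zq (r : ℕ) (a : Fin (r+1) → Fin n) (b : Fin r → Fin n) : KK k n :=
  zel r (fun l => (xv (a l) : S1 k n)) (fun l => xv (b l))

def Tz (r : ℕ) (a : Fin (r+1) → Fin n) (b : Fin r → Fin n) (σ : Equiv.Perm (Fin (r+1))) : KK k n :=
  X (a (σ (Fin.last r))) ⊗ₜ[k] (ιM k r (fun j => q (b j) (a (σ j.castSucc))) : La k n)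

theorem zq_eq (r : ℕ) (a : Fin (r+1) → Fin n) (b : Fin r → Fin n) :
    (zq r a b : KK k n) = ∑ σ : Equiv.Perm (Fin (r+1)), ((Equiv.Perm.sign σ : ℤ)) • Tz r a b σ := rfl

theorem E_Tz (α β : Fin n) (r : ℕ) (a : Fin (r+1) → Fin n) (b : Fin r → Fin n)
    (σ : Equiv.Perm (Fin (r+1))) : (FK k n).E α β (Tz r a b σ) =
      (∑ j, dl k β (b j) • Tz r a (Function.update b j α) σ) +
      ∑ i, dl k β (a i) • Tz r (Function.update a i α) b σ := by
  have h1 : ∀ j, (X (a (σ (Fin.last r))) : S k n) ⊗ₜ[k] (ιM k r (Function.update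
      (fun j => q (b j) (a (σ j.castSucc))) j (d2 α β (q (b j) (a (σ j.castSucc))))) : La k n) =
      dl k β (b j) • Tz r a (Function.update b j α) σ +
      dl k β (a (σ j.castSucc)) • Tz r (Function.update a (σ j.castSucc) α) b σ := by
    intro j
    rw [d2_q, AlternatingMap.map_update_add, AlternatingMap.map_update_smul,
      AlternatingMap.map_update_smul, TensorProduct.tmul_add, TensorProduct.tmul_smul,
      TensorProduct.tmul_smul]
    congr 2
    · rw [Tz]
      congr 2
      funext l
      by_cases h : l = j
      · subst h; simp
      · simp [h]
    · rw [Tz]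
      congr 2
      · congr 1
        rw [Function.update_of_ne]
        intro h
        exact (Fin.castSucc_lt_last j).ne (σ.injective h).symm
      · funext l
        by_cases h : l = j
        · subst h; simp
        · have : σ l.castSucc ≠ σ j.castSucc := fun h' => h (Fin.castSucc_injective _ (σ.injective h'))
          simp [h]
  rw [Tz, E_XM, Finset.sum_congr rfl fun j _ => h1 j, Finset.sum_add_distrib,
    ← Equiv.sum_comp σ (fun i => dl k β (a i) • Tz r (Function.update a i α) b σ),
    Fin.sum_univ_castSucc (n := r)]
  have h2 : (X α ⊗ₜ[k] (ιM k r (fun j => q (b j) (a (σ j.castSucc))) : La k n) : KK k n) =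
      Tz r (Function.update a (σ (Fin.last r)) α) b σ := by
    rw [Tz]
    congr 2
    · simp
    · funext l
      have : σ l.castSucc ≠ σ (Fin.last r) := fun h' => (Fin.castSucc_lt_last l).ne (σ.injective h')
      simp [(Fin.castSucc_lt_last l).ne]
  rw [h2]
  abel

theorem E_zq (α β : Fin n) (r : ℕ) (a : Fin (r+1) → Fin n) (b : Fin r → Fin n) :
    (FK k n).E α β (zq r a b) =
      (∑ j, dl k β (b j) • zq r a (Function.update b j α)) +
      ∑ i, dl k β (a i) • zq r (Function.update a i α) b := by
  simp only [zq_eq, map_sum, map_zsmul, E_Tz, Finset.smul_sum, smul_add, Finset.sum_add_distrib]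
  congr 1
  · rw [Finset.sum_comm]
    exact Finset.sum_congr rfl fun _ _ => Finset.sum_congr rfl fun _ _ => smul_comm _ _ _
  · rw [Finset.sum_comm]
    exact Finset.sum_congr rfl fun _ _ => Finset.sum_congr rfl fun _ _ => smul_comm _ _ _

theorem d_zq (r : ℕ) (a : Fin (r+1) → Fin n) (b : Fin r → Fin n) :
    (FK k n).d (zq r a b) = 0 := by
  rw [zq_eq, map_sum]
  simp only [map_zsmul]
  cases r with
  | zero =>
    refine Finset.sum_eq_zero fun σ _ => ?_
    rw [Tz, d_M0, smul_zero]
  | succ r =>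
    simp only [Tz, d_M, Finset.smul_sum]
    rw [Finset.sum_comm]
    refine Finset.sum_eq_zero fun j _ => ?_
    refine Finset.sum_involution (fun σ _ => σ * Equiv.swap j.castSucc (Fin.last (r+1))) ?_ ?_ ?_ ?_
    · intro σ _
      have hne : j.castSucc ≠ Fin.last (r+1) := (Fin.castSucc_lt_last j).ne
      rw [Equiv.Perm.sign_mul, Equiv.Perm.sign_swap hne]
      have h1 : (σ * Equiv.swap j.castSucc (Fin.last (r+1))) (Fin.last (r+1)) = σ j.castSucc := by
        simp
      have h2 : (σ * Equiv.swap j.castSucc (Fin.last (r+1))) j.castSucc = σ (Fin.last (r+1)) := by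
        simp
      have h3 : ∀ l, (σ * Equiv.swap j.castSucc (Fin.last (r+1))) (j.succAbove l).castSucc =
          σ (j.succAbove l).castSucc := by
        intro l
        rw [Equiv.Perm.mul_apply, Equiv.swap_apply_of_ne_of_ne]
        · intro h; exact Fin.succAbove_ne j l (Fin.castSucc_injective _ h)
        · exact (Fin.castSucc_lt_last _).ne
      rw [h1, h2]
      simp only [h3, q_val]
      rw [show (X (a (σ j.castSucc)) * (X (b j) * X (a (σ (Fin.last (r+1))))) : S k n) =
        X (a (σ (Fin.last (r+1)))) * (X (b j) * X (a (σ j.castSucc))) by ring]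
      push_cast
      rw [← add_smul]
      simp
    · intro σ _ _ h
      have hne : j.castSucc ≠ Fin.last (r+1) := (Fin.castSucc_lt_last j).ne
      have := mul_eq_left.1 h
      exact hne (Equiv.swap_eq_one_iff.1 this)
    · intro σ _; exact Finset.mem_univ _
    · intro σ _; simp [mul_assoc]

theorem al_zq (r : ℕ) (a : Fin (r+1) → Fin n) (b : Fin r → Fin n) :
    al (zq r a b : KK k n) = (-1 : k)^r • zq r a b := by
  simp only [zq_eq, map_sum, map_zsmul, Tz, al_M, Finset.smul_sum]
  exact Finset.sum_congr rfl fun _ _ => smul_comm _ _ _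

end Kz

namespace Kz
set_option linter.unusedSectionVars false
variable [CharZero k]

local notation "ιM" => ExteriorAlgebra.ιMulti

theorem om_eq (y : Fin n) (l : List (Fin n)) (p : KK k n) :
    (FK k n).om y l p = (1 ⊗ₜ[k] (ιM k l.length (fun j => q y (l.get j)) : La k n) : KK k n) * p := by
  induction l with
  | nil =>
    rw [show (ιM k ([] : List (Fin n)).length (fun j => q y (([] : List (Fin n)).get j)) : La k n) = 1
      from ExteriorAlgebra.ιMulti_zero_apply _]
    exact (one_mul p).symm
  | cons j l ih =>
    have e : (FK k n).om y (j :: l) p = eK y j ((FK k n).om y l p) := rfl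
    rw [e, ih, eK_eq, ← mul_assoc]
    congr 1
    rw [← split_t]
    congr 1
    exact (ExteriorAlgebra.ιMulti_succ_apply (R := k) (n := l.length)
      (fun i => q y ((j :: l).get i))).symm

theorem perm_last (r : ℕ) (σ : Equiv.Perm (Fin (r+1))) (h : σ (Fin.last r) = Fin.last r) :
    ∃ τ : Equiv.Perm (Fin r), (∀ j, σ j.castSucc = (τ j).castSucc) ∧
      Equiv.Perm.sign τ = Equiv.Perm.sign σ := by
  have h₁ : ∀ x, σ x ≠ Fin.last r ↔ x ≠ Fin.last r := by
    intro x
    rw [not_iff_not]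
    constructor
    · intro hx; exact σ.injective (hx.trans h.symm)
    · intro hx; rw [hx, h]
  have h₂ : ∀ x, σ x ≠ x → x ≠ Fin.last r := by
    rintro x hx rfl; exact hx h
  refine ⟨(finSuccAboveEquiv (Fin.last r)).symm.permCongr (σ.subtypePerm h₁), ?_, ?_⟩
  · intro j
    simp only [Equiv.permCongr_apply, Equiv.symm_symm]
    rw [finSuccAboveEquiv_symm_apply_last]
    simp [finSuccAboveEquiv_apply]
  · rw [Equiv.Perm.sign_permCongr, Equiv.Perm.sign_subtypePerm _ h₁ h₂]

theorem range_e (y : Fin n) (r : ℕ) (s : S k n) (m : Fin r → S2 k n) (j : Fin r) (hj : m j = q y y)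
    (p : KK k n) : ∃ b, (s ⊗ₜ[k] (ιM k r m : La k n) : KK k n) * p = eK y y b := by
  cases r with
  | zero => exact j.elim0
  | succ r =>
    have key : ∀ m : Fin (r+1) → S2 k n, m 0 = q y y →
        ∃ b, (s ⊗ₜ[k] (ιM k (r+1) m : La k n) : KK k n) * p = eK y y b := by
      intro m hm
      rw [ExteriorAlgebra.ιMulti_succ_apply, hm, split_t, mul_assoc]
      exact ⟨_, (eK_eq _ _ _).symm⟩
    by_cases h0 : j = 0
    · subst h0; exact key m hj
    · obtain ⟨b, hb⟩ := key (m ∘ Equiv.swap 0 j) (by simp [hj])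
      rw [AlternatingMap.map_swap _ _ (Ne.symm h0), ← neg_one_smul k, TensorProduct.tmul_smul,
        smul_mul_assoc] at hb
      exact ⟨(-1 : k) • b, by rw [map_smul, ← hb, smul_smul]; simp⟩

theorem hz_exists (y : Fin n) (l : List (Fin n)) :
    ∃ (C : k) (a : Fin (l.length+1) → Fin n) (b : Fin l.length → Fin n), C ≠ 0 ∧
      ∀ p, (zq l.length a b : KK k n) * p - C • (FK k n).X y ((FK k n).om y l p) ∈ (FK k n).J y := by
  classical
  refine ⟨((Finset.univ.filter (fun σ : Equiv.Perm (Fin (l.length+1)) =>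
    σ (Fin.last _) = Fin.last _)).card : k), Fin.snoc (α := fun _ => Fin n) l.get y, fun _ => y,
    ?_, ?_⟩
  · rw [Nat.cast_ne_zero, ← Nat.pos_iff_ne_zero, Finset.card_pos]
    exact ⟨1, by simp⟩
  · intro p
    rw [zq_eq, ← Finset.sum_filter_add_sum_filter_not Finset.univ
      (fun σ : Equiv.Perm (Fin (l.length+1)) => σ (Fin.last _) = Fin.last _), add_mul,
      Finset.sum_mul, Finset.sum_mul]
    have h1 : ∀ σ ∈ Finset.univ.filter (fun σ : Equiv.Perm (Fin (l.length+1)) =>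
        σ (Fin.last _) = Fin.last _), (((Equiv.Perm.sign σ : ℤ)) •
        (Tz l.length (Fin.snoc (α := fun _ => Fin n) l.get y) (fun _ => y) σ : KK k n)) * p =
        (FK k n).X y ((FK k n).om y l p) := by
      intro σ hσ
      have hσ := (Finset.mem_filter.1 hσ).2
      obtain ⟨τ, hτ, hs⟩ := perm_last _ σ hσ
      have e1 : (Tz l.length (Fin.snoc (α := fun _ => Fin n) l.get y) (fun _ => y) σ : KK k n) =
        X y ⊗ₜ[k] (ιM k l.length ((fun j => q y (l.get j)) ∘ τ) : La k n) := by
        rw [Tz, hσ, Fin.snoc_last]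
        congr 2
        funext j
        rw [hτ, Fin.snoc_castSucc]; rfl
      have e2 : (FK k n).X y ((FK k n).om y l p) = XK y ((FK k n).om y l p) := rfl
      rw [e1, e2, om_eq, XK_eq, ← mul_assoc, Algebra.TensorProduct.tmul_mul_tmul, one_mul, mul_one]
      congr 1
      rw [AlternatingMap.map_perm, ← hs]
      rcases Int.units_eq_one_or (Equiv.Perm.sign τ) with h | h
      · rw [h]; simp
      · rw [h]; simp [TensorProduct.tmul_neg]
    rw [Finset.sum_congr rfl h1, Finset.sum_const, ← Nat.cast_smul_eq_nsmul k, add_sub_cancel_left]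
    refine sum_mem fun σ hσ => ?_
    have hσ := (Finset.mem_filter.1 hσ).2
    rw [smul_mul_assoc]
    refine zsmul_mem ?_ _
    rw [Fock.mem_J]
    obtain ⟨j, hj⟩ : ∃ j : Fin l.length, σ j.castSucc = Fin.last _ := by
      obtain ⟨i, hi⟩ := σ.surjective (Fin.last _)
      rcases Fin.eq_castSucc_or_eq_last i with ⟨j, rfl⟩ | rfl
      · exact ⟨j, hi⟩
      · exact absurd hi hσ
    obtain ⟨b, hb⟩ := range_e (k := k) y l.length
      (X ((Fin.snoc (α := fun _ => Fin n) l.get y : Fin (l.length+1) → Fin n) (σ (Fin.last _))))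
      (fun j => q y ((Fin.snoc (α := fun _ => Fin n) l.get y : Fin (l.length+1) → Fin n)
        (σ j.castSucc))) j (by rw [hj, Fin.snoc_last]) p
    refine ⟨0, b, ?_⟩
    rw [map_zero, map_zero, zero_add]
    exact hb

end Kz

namespace Kz
set_option linter.unusedSectionVars false
variable [CharZero k]

local notation "ιM" => ExteriorAlgebra.ιMulti

/-- the algebra generated by the cycles -/
def AA (k : Type) [Field k] (n : ℕ) : Subalgebra k (KK k n) :=
  Algebra.adjoin k {v : KK k n |
          ∃ (r : ℕ) (a : Fin (r+1) → Fin n) (b : Fin r → Fin n),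
            v = zel r (fun l => (xv (a l) : S1 k n)) (fun l => xv (b l))}

theorem zq_mem (r : ℕ) (a : Fin (r+1) → Fin n) (b : Fin r → Fin n) : (zq r a b : KK k n) ∈ AA k n :=
  Algebra.subset_adjoin ⟨r, a, b, rfl⟩

theorem AA_E (α β : Fin n) (v : KK k n) (hv : v ∈ AA k n) : (FK k n).E α β v ∈ AA k n := by
  refine Algebra.adjoin_induction (p := fun v _ => (FK k n).E α β v ∈ AA k n) ?_ ?_ ?_ ?_ hv
  · rintro _ ⟨r, a, b, rfl⟩
    have := E_zq (k := k) α β r a b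
    rw [zq] at this
    rw [this]
    exact add_mem (sum_mem fun j _ => (AA k n).smul_mem (zq_mem _ _ _) _)
      (sum_mem fun j _ => (AA k n).smul_mem (zq_mem _ _ _) _)
  · intro r
    rw [Algebra.algebraMap_eq_smul_one, map_smul]
    have : (FK k n).E α β (1 : KK k n) = 0 := E_1 α β
    rw [this, smul_zero]; exact zero_mem _
  · intro x y _ _ hx hy
    rw [map_add]; exact add_mem hx hy
  · intro x y hx' hy' hx hy
    rw [E_leib]
    exact add_mem (mul_mem hx hy') (mul_mem hx' hy)

theorem main_AA (c : KK k n) (hc : (FK k n).d c = 0) : ∃ a ∈ AA k n, ∃ w, c = a + (FK k n).d w := by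
  have := (FK k n).main (Subalgebra.toSubmodule (AA k n) ⊔ LinearMap.range (FK k n).d) ?_ ?_ ?_ ?_ c hc
  · obtain ⟨a, ha, _, ⟨w, rfl⟩, h⟩ := Submodule.mem_sup.1 this
    exact ⟨a, ha, w, h.symm⟩
  · exact Submodule.mem_sup_left (one_mem (AA k n))
  · intro w; exact Submodule.mem_sup_right ⟨w, rfl⟩
  · intro α β v hv
    obtain ⟨a, ha, _, ⟨w, rfl⟩, h⟩ := Submodule.mem_sup.1 hv
    rw [← h, map_add, Fock.Ed]
    exact Submodule.add_mem_sup (AA_E α β a ha) ⟨_, rfl⟩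
  · intro y l
    obtain ⟨C, a, b, hC, h⟩ := hz_exists (k := k) y l
    have hd : ∀ p, (FK k n).d (zq l.length a b * p) =
        (-1 : k)^l.length • (zq l.length a b * (FK k n).d p) := by
      intro p
      rw [leib, d_zq, al_zq, zero_mul, zero_add, smul_mul_assoc]
    refine ⟨C⁻¹ • LinearMap.mulLeft k (zq l.length a b), ?_, ?_, ?_⟩
    · intro p hp
      obtain ⟨u, hu, _, ⟨w, rfl⟩, rfl⟩ := Submodule.mem_sup.1 hp
      rw [LinearMap.smul_apply, LinearMap.mulLeft_apply, mul_add]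
      refine Submodule.smul_mem _ _ (Submodule.add_mem_sup ((AA k n).mul_mem (zq_mem _ _ _) hu) ?_)
      refine ⟨(-1 : k)^l.length • (zq l.length a b * w), ?_⟩
      rw [map_smul, hd, smul_smul, ← mul_pow]
      simp
    · intro p hp
      rw [LinearMap.smul_apply, LinearMap.mulLeft_apply, map_smul, hd, hp, mul_zero, smul_zero,
        smul_zero]
    · intro p
      have := Submodule.smul_mem _ C⁻¹ (h p)
      rw [smul_sub, smul_smul, inv_mul_cancel₀ hC, one_smul] at this
      exact this

/-- degree projection -/
def pt (t : ℕ) : KK k n →ₗ[k] KK k n :=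
  LinearMap.lTensor (S k n) (GradedAlgebra.proj (fun i : ℕ => ⋀[k]^i (S2 k n)) t)

theorem ιM_mem (t : ℕ) (m : Fin t → S2 k n) : (ιM k t m : La k n) ∈ ⋀[k]^t (S2 k n) := by
  rw [← ExteriorAlgebra.ιMulti_span_fixedDegree]
  exact Submodule.subset_span ⟨m, rfl⟩

theorem pt_same (t : ℕ) (s : S k n) (ω : La k n) (h : ω ∈ ⋀[k]^t (S2 k n)) :
    pt t (s ⊗ₜ[k] ω) = s ⊗ₜ[k] ω := by
  rw [pt, LinearMap.lTensor_tmul, GradedAlgebra.proj_apply, DirectSum.decompose_of_mem_same (fun i : ℕ => ⋀[k]^i (S2 k n)) h]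

theorem pt_ne (t t' : ℕ) (s : S k n) (ω : La k n) (h : ω ∈ ⋀[k]^t' (S2 k n)) (hne : t' ≠ t) :
    pt t (s ⊗ₜ[k] ω) = 0 := by
  rw [pt, LinearMap.lTensor_tmul, GradedAlgebra.proj_apply, DirectSum.decompose_of_mem_ne (fun i : ℕ => ⋀[k]^i (S2 k n)) h hne,
    TensorProduct.tmul_zero]

theorem Kt_tmul (t : ℕ) (s : S k n) (ω : La k n) (h : ω ∈ ⋀[k]^t (S2 k n)) :
    s ⊗ₜ[k] ω ∈ Kt k n t := ⟨s ⊗ₜ[k] ⟨ω, h⟩, rfl⟩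

theorem pt_Kt (t : ℕ) (v : KK k n) : pt t v ∈ Kt k n t := by
  induction v using TensorProduct.induction_on with
  | zero => rw [map_zero]; exact zero_mem _
  | tmul s ω =>
    rw [pt, LinearMap.lTensor_tmul, GradedAlgebra.proj_apply]
    exact Kt_tmul _ _ _ (Subtype.property _)
  | add x y hx hy => rw [map_add]; exact add_mem hx hy

theorem Kt_ind (t : ℕ) (W : Submodule k (KK k n))
    (h : ∀ (s : S k n) (ω : La k n), ω ∈ ⋀[k]^t (S2 k n) → s ⊗ₜ[k] ω ∈ W) (v : KK k n)
    (hv : v ∈ Kt k n t) : v ∈ W := by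
  obtain ⟨x, rfl⟩ := hv
  induction x using TensorProduct.induction_on with
  | zero => rw [map_zero]; exact zero_mem _
  | tmul s ω => exact h s ω ω.2
  | add x y hx hy => rw [map_add]; exact add_mem hx hy

theorem Kt_ind' (t : ℕ) (W : Submodule k (KK k n))
    (h : ∀ (s : S k n) (m : Fin t → S2 k n), s ⊗ₜ[k] (ιM k t m : La k n) ∈ W) (v : KK k n)
    (hv : v ∈ Kt k n t) : v ∈ W := by
  refine Kt_ind t W (fun s ω hω => ?_) v hv
  rw [← ExteriorAlgebra.ιMulti_span_fixedDegree] at hω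
  induction hω using Submodule.span_induction with
  | mem x hx => obtain ⟨m, rfl⟩ := hx; exact h s m
  | zero => rw [TensorProduct.tmul_zero]; exact zero_mem _
  | add x y _ _ hx hy => rw [TensorProduct.tmul_add]; exact add_mem hx hy
  | smul c x _ hx => rw [TensorProduct.tmul_smul]; exact W.smul_mem _ hx

theorem pt_same' (t : ℕ) (v : KK k n) (hv : v ∈ Kt k n t) : pt t v = v :=
  Kt_ind t (LinearMap.eqLocus (pt t) LinearMap.id) (fun s ω h => pt_same t s ω h) v hv

theorem pt_ne' (t t' : ℕ) (hne : t' ≠ t) (v : KK k n) (hv : v ∈ Kt k n t') : pt t v = 0 :=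
  Kt_ind t' (LinearMap.ker (pt t)) (fun s ω h => pt_ne t t' s ω h hne) v hv

theorem pt_d (t : ℕ) (v : KK k n) : pt t ((FK k n).d v) = (FK k n).d (pt (t+1) v) := by
  have key : ∀ (s : S k n) (r : ℕ) (m : Fin r → S2 k n),
      pt t ((FK k n).d (s ⊗ₜ[k] (ιM k r m : La k n))) =
      (FK k n).d (pt (t+1) (s ⊗ₜ[k] (ιM k r m : La k n))) := by
    intro s r m
    cases r with
    | zero => rw [d_M0, map_zero, pt_ne (t+1) 0 _ _ (ιM_mem 0 m) (by omega), map_zero]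
    | succ r =>
      by_cases h : r = t
      · subst h
        rw [pt_same _ _ _ (ιM_mem _ m), d_M]
        simp only [map_sum, map_zsmul]
        exact Finset.sum_congr rfl fun j _ => by rw [pt_same _ _ _ (ιM_mem _ _)]
      · rw [pt_ne (t+1) (r+1) _ _ (ιM_mem _ m) (by omega), map_zero, d_M]
        simp only [map_sum, map_zsmul]
        exact Finset.sum_eq_zero fun j _ => by rw [pt_ne t r _ _ (ιM_mem _ _) h, smul_zero]
  refine kext (pt t ∘ₗ (FK k n).d) ((FK k n).d ∘ₗ pt (t+1)) ?_ v
  intro s ω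
  have hω : ω ∈ Submodule.span k (Set.range fun x : Σ n', (Fin n' → S2 k n) => ιM k x.1 x.2) := by
    rw [ExteriorAlgebra.ιMulti_span]; trivial
  rw [LinearMap.comp_apply, LinearMap.comp_apply]
  induction hω using Submodule.span_induction with
  | mem x hx => obtain ⟨⟨r, m⟩, rfl⟩ := hx; exact key s r m
  | zero => simp only [TensorProduct.tmul_zero, map_zero]
  | add x y _ _ hx hy => simp only [TensorProduct.tmul_add, map_add, hx, hy]
  | smul c x _ hx => simp only [TensorProduct.tmul_smul, map_smul, hx]

theorem D_eq (D : ℕ → KK k n →ₗ[k] KK k n) (hD : IsKoszulDiff D) (t : ℕ) (v : KK k n)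
    (hv : v ∈ Kt k n t) : D t v = (FK k n).d v := by
  refine Kt_ind' t (LinearMap.eqLocus (D t) (FK k n).d) (fun s m => ?_) v hv
  change D t _ = (FK k n).d _
  cases t with
  | zero => rw [hD.1, d_M0]; rfl
  | succ t => rw [hD.2, d_M]

theorem Kt_mul (i j : ℕ) (u v : KK k n) (hu : u ∈ Kt k n i) (hv : v ∈ Kt k n j) :
    u * v ∈ Kt k n (i + j) := by
  refine Kt_ind i ((Kt k n (i+j)).comap (LinearMap.mulRight k v)) (fun s ω h => ?_) u hu
  refine Kt_ind j ((Kt k n (i+j)).comap (LinearMap.mulLeft k (s ⊗ₜ[k] ω : KK k n)))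
    (fun s' ω' h' => ?_) v hv
  change (s ⊗ₜ[k] ω : KK k n) * (s' ⊗ₜ[k] ω') ∈ Kt k n (i+j)
  rw [Algebra.TensorProduct.tmul_mul_tmul]
  exact Kt_tmul _ _ _ (SetLike.mul_mem_graded (A := fun i : ℕ => ⋀[k]^i (S2 k n)) h h')

theorem zq_Kt (r : ℕ) (a : Fin (r+1) → Fin n) (b : Fin r → Fin n) : (zq r a b : KK k n) ∈ Kt k n r := by
  rw [zq_eq]
  exact sum_mem fun σ _ => zsmul_mem (Kt_tmul _ _ _ (ιM_mem _ _)) _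

theorem AA_hom (v : KK k n) (hv : v ∈ AA k n) :
    v ∈ ⨆ t, (Subalgebra.toSubmodule (AA k n) ⊓ Kt k n t) := by
  refine Algebra.adjoin_induction
    (p := fun v _ => v ∈ ⨆ t, (Subalgebra.toSubmodule (AA k n) ⊓ Kt k n t)) ?_ ?_ ?_ ?_ hv
  · rintro _ ⟨r, a, b, rfl⟩
    exact Submodule.mem_iSup_of_mem r ⟨zq_mem r a b, zq_Kt r a b⟩
  · intro c
    refine Submodule.mem_iSup_of_mem 0 ⟨(AA k n).algebraMap_mem c, ?_⟩
    rw [Algebra.algebraMap_eq_smul_one]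
    refine Submodule.smul_mem _ _ (Kt_tmul 0 1 1 ?_)
    exact SetLike.one_mem_graded (fun i : ℕ => ⋀[k]^i (S2 k n))
  · intro x y _ _ hx hy; exact add_mem hx hy
  · intro x y hx0 hy0 hx hy
    clear hx0 hy0
    induction hx using Submodule.iSup_induction' with
    | zero => rw [zero_mul]; exact zero_mem _
    | add x x' _ _ h h' => rw [add_mul]; exact add_mem h h'
    | mem i x hx =>
      induction hy using Submodule.iSup_induction' with
      | zero => rw [mul_zero]; exact zero_mem _
      | add x x' _ _ h h' => rw [mul_add]; exact add_mem h h'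
      | mem j y hy =>
        exact Submodule.mem_iSup_of_mem (i + j) ⟨(AA k n).mul_mem hx.1 hy.1, Kt_mul i j x y hx.2 hy.2⟩

theorem AA_pt (t : ℕ) (v : KK k n) (hv : v ∈ AA k n) : pt t v ∈ AA k n := by
  have h := AA_hom v hv
  induction h using Submodule.iSup_induction' with
  | zero => rw [map_zero]; exact zero_mem _
  | add x x' hx hx' h h' =>
    have le : (⨆ t, (Subalgebra.toSubmodule (AA k n) ⊓ Kt k n t)) ≤ Subalgebra.toSubmodule (AA k n) :=
      iSup_le fun _ => inf_le_left
    rw [map_add]; exact add_mem (h (le hx)) (h' (le hx'))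
  | mem i x hx =>
    by_cases hi : i = t
    · subst hi; rw [pt_same' _ _ hx.2]; exact hx.1
    · rw [pt_ne' _ _ hi _ hx.2]; exact zero_mem _

theorem final (D : ℕ → KK k n →ₗ[k] KK k n) (hD : IsKoszulDiff D)
    (t : ℕ) (c : KK k n) (hc : c ∈ Kt k n t) (hcyc : D t c = 0) :
    ∃ u w : KK k n, u ∈ AA k n ∧ u ∈ Kt k n t ∧ w ∈ Kt k n (t+1) ∧ c = u + D (t+1) w := by
  rw [D_eq D hD t c hc] at hcyc
  obtain ⟨a, ha, w, h⟩ := main_AA c hcyc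
  refine ⟨pt t a, pt (t+1) w, AA_pt t a ha, pt_Kt _ _, pt_Kt _ _, ?_⟩
  rw [D_eq D hD _ _ (pt_Kt _ _), ← pt_d, ← map_add, ← h, pt_same' _ _ hc]

end Kz

/-- Let `A ⊆ K` be the `k`-subalgebra of the Koszul complex generated by
all elements `z_{a,b}` over all `t ≥ 0` and all sequences `a`, `b` of variables, and let
`A_t = A ∩ K_t`.  Then every Koszul cycle `c ∈ ker(d_t)` can be written as
`c = u + d_{t+1}(w)` with `u ∈ A_t` and `w ∈ K_{t+1}`; i.e. the Koszul homology `H_*(𝔪²)`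
is generated as a `k`-algebra by the classes of the `z_{a,b}`. -/
theorem koszul_homology_generated_by_zel (k : Type) [Field k] [CharZero k] (n : ℕ)
    (D : ℕ → KK k n →ₗ[k] KK k n) (hD : IsKoszulDiff D)
    (t : ℕ) (c : KK k n) (hc : c ∈ Kt k n t) (hcyc : D t c = 0) :
    ∃ u w : KK k n,
      u ∈ Algebra.adjoin k {v : KK k n |
          ∃ (r : ℕ) (a : Fin (r+1) → Fin n) (b : Fin r → Fin n),
            v = zel r (fun l => (xv (a l) : S1 k n)) (fun l => xv (b l))} ∧
      u ∈ Kt k n t ∧ w ∈ Kt k n (t+1) ∧ c = u + D (t+1) w := by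
  exact Kz.final D hD t c hc hcyc

end
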